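/- Assume ε ∉ (1/2)ℤ. Define the N×N matrix W^{ε,∘} by W^{ε,∘}_{ij} = V₁(s_{i+1+ε}, s_{j+1}) − V₁(s_{i+ε}, s_{j+1}) − V₁(s_{i+1+ε}, s_j) + V₁(s_{i+ε}, s_j) + ∫_{s_{i+ε}}^{s_{i+1+ε}} ∫_{s_j}^{s_{j+1}} V₂(s,t) dt ds for i,j = 0,…,N−1 (the non-conforming Petrov–Galerkin matrix, in which the weakly singular part is integrated exactly). Then there exist h₀ > 0 and β > 0, depending only on V₁, V₂ and ε, such that for every positive integer N with h = 1/N ≤ h₀ and every φ ∈ ℂ^N, |W^{ε,∘} φ|₂ ≥ β h |φ|₂ in the Euclidean norm. -/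

import Mathlib

noncomputable section

/-- Smooth kernel data, 1-periodic in each variable. -/
def SPK (A : ℝ → ℝ → ℂ) : Prop :=
  ContDiff ℝ (⊤ : ℕ∞) (fun p : ℝ × ℝ => A p.1 p.2) ∧
    (∀ s t, A (s + 1) t = A s t) ∧ (∀ s t, A s (t + 1) = A s t)

/-- Logarithmic kernel `V(s,t) = (i/(2π)) A(s,t) log(sin²(π(s−t))) + K(s,t)`. -/
def logKer (A K : ℝ → ℝ → ℂ) (s t : ℝ) : ℂ :=
  Complex.I / (2 * Real.pi) * A s t * (Real.log (Real.sin (Real.pi * (s - t)) ^ 2) : ℂ) + K s t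

/-- Grid point `s_{j+ε} = (j − 1/2 + ε)h`. -/
def sg (h ε : ℝ) (j : ℤ) : ℝ := ((j : ℝ) - 1 / 2 + ε) * h

/-- Grid point `t_{j+ε} = (j + ε)h`. -/
def tg (h ε : ℝ) (j : ℤ) : ℝ := ((j : ℝ) + ε) * h

/-- Integral operator with kernel `V`. -/
def Vop (V : ℝ → ℝ → ℂ) (φ : ℝ → ℂ) (s : ℝ) : ℂ := ∫ t in (0:ℝ)..1, V s t * φ t

/-- Hypersingular operator `W = −D V₁ D + V₂`. -/
def Wop (V1 V2 : ℝ → ℝ → ℂ) (φ : ℝ → ℂ) (s : ℝ) : ℂ :=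
  -deriv (Vop V1 (deriv φ)) s + Vop V2 φ s

/-- Nyström matrix entries `W^ε_{ij}`. -/
def Wmat (V1 V2 : ℝ → ℝ → ℂ) (h ε : ℝ) (i j : ℤ) : ℂ :=
  V1 (sg h ε (i + 1)) (sg h 0 (j + 1)) - V1 (sg h ε i) (sg h 0 (j + 1))
    - V1 (sg h ε (i + 1)) (sg h 0 j) + V1 (sg h ε i) (sg h 0 j)
    + (h : ℂ) ^ 2 * V2 (tg h ε i) (tg h 0 j)

/-- Fourier coefficient of a 1-periodic function. -/
def fc (u : ℝ → ℂ) (m : ℤ) : ℂ :=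
  ∫ t in (0:ℝ)..1, u t * Complex.exp (-(2 * Real.pi * Complex.I * (m : ℂ) * (t : ℂ)))

/-- Periodic Sobolev norm of order `r`. -/
def sobNorm (r : ℝ) (u : ℝ → ℂ) : ℝ :=
  Real.sqrt (‖fc u 0‖ ^ 2 +
    ∑' m : ℤ, if m = 0 then 0 else |(m : ℝ)| ^ (2 * r) * ‖fc u m‖ ^ 2)

/-- 1-periodic step function on the ε-shifted grid with coefficients `v`. -/
def stepf (N : ℕ) (ε : ℝ) (v : ZMod N → ℂ) (s : ℝ) : ℂ :=
  v ((⌊s * N + 1 / 2 - ε⌋ : ℤ) : ZMod N)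

/-- Midpoint quadrature error matrix entries `E^ε_{ij}`. -/
def Emat (V2 : ℝ → ℝ → ℂ) (h ε : ℝ) (i j : ℤ) : ℂ :=
  (∫ s in (sg h ε i)..(sg h ε (i + 1)), ∫ t in (sg h 0 j)..(sg h 0 (j + 1)), V2 s t)
    - (h : ℂ) ^ 2 * V2 (tg h ε i) (tg h 0 j)

/-- Spectral (ℓ²-operator) norm of a complex `N×N` matrix. -/
def specNorm {N : ℕ} (M : Matrix (Fin N) (Fin N) ℂ) : ℝ :=
  ‖LinearMap.toContinuousLinearMap (Matrix.toEuclideanLin M)‖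

/-- The function `C̄₁(t) = −(1/(2πi)) log(4 sin²(πt))`. -/
def Cbar1 (t : ℝ) : ℂ :=
  -(1 / (2 * Real.pi * Complex.I)) * (Real.log (4 * Real.sin (Real.pi * t) ^ 2) : ℂ)

end

/-- The Petrov–Galerkin matrix `W^{ε,∘}`, with the weakly singular part integrated exactly. -/
noncomputable def WmatPG (V1 V2 : ℝ → ℝ → ℂ) (h ε : ℝ) (i j : ℤ) : ℂ :=
  V1 (sg h ε (i + 1)) (sg h 0 (j + 1)) - V1 (sg h ε i) (sg h 0 (j + 1))
    - V1 (sg h ε (i + 1)) (sg h 0 j) + V1 (sg h ε i) (sg h 0 j)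
    + ∫ s in (sg h ε i)..(sg h ε (i + 1)), ∫ t in (sg h 0 j)..(sg h 0 (j + 1)), V2 s t

/-!
The proof is a compactness argument on the Fourier side.

Since `log (sin²) = log (4 sin²) - log 4`, both kernels have the form `A(s,t) f(s-t) + K(s,t)` with
smooth `A`, `K` and `f x = log (4 sin² (πx))`, whose Fourier coefficients are `-1 / |n|`, `n ≠ 0`.
Expanding `A` and `K` in double Fourier series, the discrete Fourier coefficients of `φ` and of
`W^{ε,∘} φ` are related by an equation with a principal symbol, the constant `A₁(s,s)` times a
second difference times a grid coefficient of `f`, and a remainder symbol. Because `A₁` is constant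
on the diagonal, the remainder involves `A₁` only through differences of grid coefficients of `f`,
so it is bounded, uniformly in `N` and in the frequency, by a rapidly decreasing majorant. The
principal symbol at `|k| ≤ N / 2` is at least a multiple of `|k|`: writing the logarithm as the
integral of a geometric series reduces this to `cos (πε) ≠ 0`.

If stability fails, there are normalised vectors of growing size with vanishing images. By
ellipticity their coefficients are `O(1 / (1 + |k|))`, so a subsequence converges to a nonzero
sequence. As `sin (πε) ≠ 0` makes the symbols converge to those of `W`, the limit solves the
equation `Wφ = 0` in Fourier coefficients, and bootstrapping with ellipticity shows that it decays
rapidly. It is thus a nonzero smooth periodic function annihilated by `W`.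
-/

section

open Complex MeasureTheory Filter Topology
open scoped Real

/-! ### Characters and Fourier coefficients -/

/-- The character `x ↦ exp (2πinx)` of `ℝ/ℤ`, as a function on `ℝ`. -/
noncomputable def mode (n : ℤ) (x : ℝ) : ℂ := exp (2 * π * I * n * x)

section Mode

variable (m n k : ℤ) (x y : ℝ)

lemma mode_zero_left : mode 0 x = 1 := by simp [mode]

lemma mode_zero_right : mode n 0 = 1 := by simp [mode]

lemma mode_add_left : mode (m + n) x = mode m x * mode n x := by
  simp only [mode, ← exp_add]; congr 1; push_cast; ring

lemma mode_add_right : mode n (x + y) = mode n x * mode n y := by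
  simp only [mode, ← exp_add]; congr 1; push_cast; ring

lemma mode_neg_left : mode (-n) x = (mode n x)⁻¹ := by
  simp only [mode, ← exp_neg]; congr 1; push_cast; ring

lemma mode_neg_right : mode n (-x) = mode (-n) x := by
  simp [mode]

lemma mode_intCast_mul : mode n (k * x) = mode (n * k) x := by
  simp only [mode]; congr 1; push_cast; ring

lemma mode_eq_zpow : mode n x = mode 1 x ^ n := by
  simp only [mode, ← exp_int_mul]; congr 1; push_cast; ring

lemma norm_mode : ‖mode n x‖ = 1 := by
  have h : (2 * π * I * n * x : ℂ) = ((2 * π * n * x : ℝ) : ℂ) * I := by push_cast; ring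
  rw [mode, h, norm_exp_ofReal_mul_I]

lemma mode_ne_zero : mode n x ≠ 0 := exp_ne_zero _

lemma conj_mode : (starRingEnd ℂ) (mode n x) = mode (-n) x := by
  rw [mode_neg_left, inv_eq_conj (norm_mode n x)]

lemma mode_intCast : mode n (k : ℝ) = 1 := by
  rw [mode, exp_eq_one_iff]
  exact ⟨n * k, by push_cast; ring⟩

lemma mode_add_one : mode n (x + 1) = mode n x := by
  rw [mode_add_right, show mode n 1 = 1 by simpa using mode_intCast n 1, mul_one]

@[fun_prop]
lemma continuous_mode : Continuous (mode n) := by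
  unfold mode; fun_prop

lemma hasDerivAt_mode : HasDerivAt (mode n) (2 * π * I * n * mode n x) x := by
  have h := (ofRealCLM.hasDerivAt (x := x)).const_mul (2 * π * I * n : ℂ) |>.cexp
  exact h.congr_deriv (by simp [mode, mul_comm])

lemma norm_mode_sub_one_le : ‖mode n x - 1‖ ≤ 2 * π * |(n : ℝ)| * |x| := by
  have h := Real.norm_exp_I_mul_ofReal_sub_one_le (x := 2 * π * n * x)
  have e : I * ((2 * π * n * x : ℝ) : ℂ) = 2 * π * I * n * x := by push_cast; ring
  rwa [e, Real.norm_eq_abs, abs_mul, abs_mul, abs_of_pos Real.two_pi_pos] at h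

lemma integral_mode : ∫ x in (0 : ℝ)..1, mode n x = if n = 0 then 1 else 0 := by
  split_ifs with h
  · simp [h, mode_zero_left]
  · have hc : (2 * π * I * n : ℂ) ≠ 0 := by simp [Real.pi_ne_zero, h]
    have hderiv : ∀ x ∈ Set.uIcc (0 : ℝ) 1,
        HasDerivAt (fun x => mode n x / (2 * π * I * n)) (mode n x) x := fun x _ => by
      simpa [mul_div_cancel_left₀ _ hc] using (hasDerivAt_mode n x).div_const (2 * π * I * n)
    rw [intervalIntegral.integral_eq_sub_of_hasDerivAt hderiv
      ((continuous_mode n).intervalIntegrable _ _)]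
    rw [show mode n 1 = 1 by simpa using mode_intCast n 1, mode_zero_right, sub_self]

end Mode

lemma fc_eq_integral_mode (u : ℝ → ℂ) (m : ℤ) : fc u m = ∫ t in (0 : ℝ)..1, u t * mode (-m) t := by
  simp only [fc, mode]; congr! 4; push_cast; ring

lemma fc_const_mul (c : ℂ) (u : ℝ → ℂ) (m : ℤ) : fc (fun t => c * u t) m = c * fc u m := by
  simp only [fc_eq_integral_mode, mul_assoc, intervalIntegral.integral_const_mul]

lemma fc_add {u v : ℝ → ℂ} (hu : Continuous u) (hv : Continuous v) (m : ℤ) :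
    fc (fun t => u t + v t) m = fc u m + fc v m := by
  simp only [fc_eq_integral_mode, add_mul]
  exact intervalIntegral.integral_add (Continuous.intervalIntegrable (by fun_prop) _ _)
    (Continuous.intervalIntegrable (by fun_prop) _ _)

lemma fc_one (m : ℤ) : fc (fun _ => 1) m = if m = 0 then 1 else 0 := by
  simp [fc_eq_integral_mode, integral_mode]

lemma norm_fc_le {u : ℝ → ℂ} {C : ℝ} (h : ∀ x ∈ Set.Icc (0 : ℝ) 1, ‖u x‖ ≤ C) (m : ℤ) :
    ‖fc u m‖ ≤ C := by
  rw [fc_eq_integral_mode]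
  simpa using intervalIntegral.norm_integral_le_of_norm_le_const (a := (0 : ℝ)) (b := 1) (C := C)
    (f := fun t => u t * mode (-m) t) fun x hx => by
      rw [Set.uIoc_of_le zero_le_one] at hx
      simpa [norm_mode] using h x (Set.Ioc_subset_Icc_self hx)

lemma hasSum_fc {f : ℝ → ℂ} (hf : Continuous f) (hp : Function.Periodic f 1)
    (hs : Summable (fc f)) (x : ℝ) : HasSum (fun m : ℤ => fc f m * mode m x) (f x) := by
  have : Fact (0 < (1 : ℝ)) := ⟨one_pos⟩
  let F : C(AddCircle (1 : ℝ), ℂ) := ⟨hp.lift, continuous_coinduced_dom.mpr hf⟩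
  have hF (y : ℝ) : F (y : AddCircle (1 : ℝ)) = f y := hp.lift_coe y
  have hmode (m : ℤ) (y : ℝ) : fourier m (y : AddCircle (1 : ℝ)) = mode m y := by
    simp [mode]
  have hcoef : fourierCoeff F = fc f := by
    ext m
    simp [fourierCoeff_eq_intervalIntegral _ _ 0, fc_eq_integral_mode, hF, hmode,
      mul_comm (mode _ _)]
  simpa [hcoef, hF, hmode] using
    has_pointwise_sum_fourier_series_of_summable (f := F) (by rwa [hcoef]) (x : AddCircle (1 : ℝ))

lemma fc_deriv {f f' : ℝ → ℂ} (hf : ∀ x, HasDerivAt f (f' x) x) (hf' : Continuous f')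
    (hp : Function.Periodic f 1) (m : ℤ) : fc f' m = 2 * π * I * m * fc f m := by
  have hfc : Continuous f := continuous_iff_continuousAt.mpr fun x => (hf x).continuousAt
  have hderiv : ∀ x ∈ Set.uIcc (0 : ℝ) 1, HasDerivAt (fun x => f x * mode (-m) x)
      (f' x * mode (-m) x - 2 * π * I * m * (f x * mode (-m) x)) x := fun x _ =>
    ((hf x).mul (hasDerivAt_mode (-m) x)).congr_deriv (by push_cast; ring)
  have hFTC := intervalIntegral.integral_eq_sub_of_hasDerivAt hderiv
    (Continuous.intervalIntegrable (by fun_prop) _ _)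
  have hends : f 1 * mode (-m) 1 - f 0 * mode (-m) 0 = 0 := by
    have h1 := hp 0
    have h2 := mode_add_one (-m) 0
    rw [zero_add] at h1 h2
    rw [h1, h2, sub_self]
  rw [hends, intervalIntegral.integral_sub (Continuous.intervalIntegrable (by fun_prop) _ _)
    (Continuous.intervalIntegrable (by fun_prop) _ _), intervalIntegral.integral_const_mul,
    sub_eq_zero] at hFTC
  simpa only [fc_eq_integral_mode] using hFTC

/-! ### Frequency weights -/

/-- The frequency weight `1 + |n|`, in which decay of Fourier coefficients is measured. -/
def wt (n : ℤ) : ℝ := 1 + |(n : ℝ)|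

lemma one_le_wt (n : ℤ) : 1 ≤ wt n := by simp [wt]

lemma wt_pos (n : ℤ) : 0 < wt n := one_pos.trans_le (one_le_wt n)

lemma wt_neg (n : ℤ) : wt (-n) = wt n := by simp [wt]

lemma abs_le_wt (n : ℤ) : |(n : ℝ)| ≤ wt n := by simp [wt]

lemma wt_add_le (m n : ℤ) : wt (m + n) ≤ wt m * wt n := by
  simp only [wt, Int.cast_add]
  nlinarith [abs_add_le (m : ℝ) n, abs_nonneg (m : ℝ), abs_nonneg (n : ℝ),
    mul_nonneg (abs_nonneg (m : ℝ)) (abs_nonneg (n : ℝ))]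

lemma wt_le_mul_wt_sub (m n : ℤ) : wt m ≤ wt n * wt (m - n) := by
  simpa using wt_add_le n (m - n)

lemma summable_inv_wt_sq : Summable fun n : ℤ => (wt n ^ 2)⁻¹ := by
  have h : Summable fun n : ℕ => ((1 + (n : ℝ)) ^ 2)⁻¹ := by
    simpa [add_comm] using
      (summable_nat_add_iff 1).mpr (Real.summable_nat_pow_inv.mpr one_lt_two)
  exact Summable.of_nat_of_neg (by simpa [wt] using h) (by simpa [wt] using h)

/-! ### Double Fourier series of smooth kernels -/

/-- Double Fourier coefficient of a doubly periodic function. -/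
noncomputable def fc₂ (A : ℝ → ℝ → ℂ) (p q : ℤ) : ℂ := fc (fun s => fc (A s) q) p

namespace SPK

variable {A B : ℝ → ℝ → ℂ}

lemma continuous_uncurry (hA : SPK A) : Continuous fun p : ℝ × ℝ => A p.1 p.2 := hA.1.continuous

lemma continuous_right (hA : SPK A) (s : ℝ) : Continuous (A s) :=
  hA.continuous_uncurry.comp (Continuous.prodMk_right s)

lemma continuous_fc (hA : SPK A) (q : ℤ) : Continuous fun s => fc (A s) q := by
  have := hA.continuous_uncurry
  simp only [fc_eq_integral_mode]
  exact intervalIntegral.continuous_parametric_intervalIntegral_of_continuous' (by fun_prop) _ _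

lemma swap (hA : SPK A) : SPK (Function.swap A) :=
  ⟨hA.1.comp (contDiff_snd.prodMk contDiff_fst), fun s t => hA.2.2 t s, fun s t => hA.2.1 t s⟩

lemma const_mul (hA : SPK A) (c : ℂ) : SPK fun s t => c * A s t :=
  ⟨contDiff_const.mul hA.1, fun s t => by simp only [hA.2.1], fun s t => by simp only [hA.2.2]⟩

lemma add (hA : SPK A) (hB : SPK B) : SPK fun s t => A s t + B s t :=
  ⟨hA.1.add hB.1, fun s t => by simp only [hA.2.1, hB.2.1],
    fun s t => by simp only [hA.2.2, hB.2.2]⟩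

lemma hasDerivAt (hA : SPK A) (s t : ℝ) : HasDerivAt (A s) (deriv (A s) t) t :=
  ((hA.1.comp (contDiff_prodMk_right s)).differentiable (by simp) t).hasDerivAt

lemma deriv_right (hA : SPK A) : SPK fun s t => deriv (A s) t := by
  refine ⟨?_, fun s t => ?_, fun s t => ?_⟩
  · simp only [← fderiv_apply_one_eq_deriv]
    exact ContDiff.fderiv_apply (m := (⊤ : ℕ∞)) (n := (⊤ : ℕ∞)) (f := fun p : ℝ × ℝ => A p.1)
      (hA.1.comp (by fun_prop : ContDiff ℝ _ fun p : (ℝ × ℝ) × ℝ => (p.1.1, p.2)))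
      contDiff_snd contDiff_const (by simp)
  · simp only [show A (s + 1) = A s from funext (hA.2.1 s)]
  · simp only [← deriv_comp_add_const (A s), hA.2.2]

lemma fc₂_swap (hA : SPK A) (p q : ℤ) : fc₂ (Function.swap A) q p = fc₂ A p q := by
  have hc := hA.continuous_uncurry
  simp only [fc₂, Function.swap, fc_eq_integral_mode, ← intervalIntegral.integral_mul_const]
  rw [intervalIntegral_intervalIntegral_swap]
  · congr! 4; ring
  · have : Continuous fun x : ℝ × ℝ => A x.2 x.1 * mode (-p) x.2 * mode (-q) x.1 := by fun_prop
    exact (this.continuousOn.integrableOn_compact (isCompact_uIcc.prod isCompact_uIcc)).mono_set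
      (Set.prod_mono Set.uIoc_subset_uIcc Set.uIoc_subset_uIcc)

-- `A + ∂₂A` has the coefficients `(1 + 2πiq) fc₂ A p q`, and `|1 + 2πiq| ≥ wt q`.
lemma wt_mul_norm_fc₂_le (hA : SPK A) (p q : ℤ) :
    wt q * ‖fc₂ A p q‖ ≤ ‖fc₂ (fun s t => A s t + deriv (A s) t) p q‖ := by
  have hcoeff (s : ℝ) : fc (fun t => A s t + deriv (A s) t) q
      = (1 + 2 * π * I * q) * fc (A s) q := by
    have hD := hA.deriv_right.continuous_right s
    rw [fc_add (hA.continuous_right s) hD, fc_deriv (hA.hasDerivAt s) hD (hA.2.2 s)]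
    ring
  have hwt : wt q ≤ ‖(1 + 2 * π * I * q : ℂ)‖ := by
    have hnorm : ‖(1 + 2 * π * I * q : ℂ)‖ ^ 2 = 1 + (2 * π * q) ^ 2 := by
      have h : (1 + 2 * π * I * q : ℂ) = (1 : ℝ) + (2 * π * q : ℝ) * I := by push_cast; ring
      rw [h, Complex.sq_norm, normSq_add_mul_I, one_pow]
    refine (sq_le_sq₀ (wt_pos q).le (norm_nonneg _)).1 ?_
    have hq : 2 * |(q : ℝ)| ≤ 1 + |(q : ℝ)| ^ 2 := by nlinarith [sq_nonneg (|(q : ℝ)| - 1)]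
    have hq' : |(q : ℝ)| ≤ |(q : ℝ)| ^ 2 := by
      rcases eq_or_ne q 0 with rfl | h
      · simp
      · have : (1 : ℝ) ≤ |(q : ℝ)| := by exact_mod_cast Int.one_le_abs h
        nlinarith
    have hpi : 3 ≤ (2 * π) ^ 2 := by nlinarith [Real.pi_gt_three]
    rw [hnorm, wt, mul_pow, ← sq_abs (q : ℝ)]
    nlinarith [mul_le_mul_of_nonneg_right hpi (sq_nonneg |(q : ℝ)|)]
  simp only [fc₂, hcoeff, fc_const_mul, norm_mul]
  gcongr

lemma exists_wt_pow_mul_norm_fc₂_le (hA : SPK A) (r : ℕ) :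
    ∃ B, SPK B ∧ ∀ p q, wt q ^ r * ‖fc₂ A p q‖ ≤ ‖fc₂ B p q‖ := by
  induction r with
  | zero => exact ⟨A, hA, fun p q => by simp⟩
  | succ r ih =>
    obtain ⟨B, hB, h⟩ := ih
    refine ⟨_, hB.add hB.deriv_right, fun p q => ?_⟩
    calc wt q ^ (r + 1) * ‖fc₂ A p q‖ = wt q * (wt q ^ r * ‖fc₂ A p q‖) := by ring
      _ ≤ wt q * ‖fc₂ B p q‖ := mul_le_mul_of_nonneg_left (h p q) (wt_pos q).le
      _ ≤ _ := hB.wt_mul_norm_fc₂_le p q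

lemma exists_norm_fc₂_le (hA : SPK A) : ∃ C, ∀ p q, ‖fc₂ A p q‖ ≤ C := by
  obtain ⟨C, hC⟩ := (isCompact_Icc.prod isCompact_Icc).exists_bound_of_continuousOn
    (s := Set.Icc (0 : ℝ) 1 ×ˢ Set.Icc (0 : ℝ) 1) hA.continuous_uncurry.continuousOn
  exact ⟨C, fun p q => norm_fc_le (fun s hs => norm_fc_le (fun t ht => hC (s, t) ⟨hs, ht⟩) q) p⟩

lemma exists_wt_mul_wt_pow_mul_norm_fc₂_le (hA : SPK A) (r : ℕ) :
    ∃ C, ∀ p q, (wt p * wt q) ^ r * ‖fc₂ A p q‖ ≤ C := by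
  obtain ⟨B, hB, hAB⟩ := hA.exists_wt_pow_mul_norm_fc₂_le r
  obtain ⟨B', hB', hBB'⟩ := hB.swap.exists_wt_pow_mul_norm_fc₂_le r
  obtain ⟨C, hC⟩ := hB'.exists_norm_fc₂_le
  refine ⟨C, fun p q => ?_⟩
  calc (wt p * wt q) ^ r * ‖fc₂ A p q‖ = wt p ^ r * (wt q ^ r * ‖fc₂ A p q‖) := by ring
    _ ≤ wt p ^ r * ‖fc₂ (Function.swap B) q p‖ := by
      rw [hB.fc₂_swap]
      exact mul_le_mul_of_nonneg_left (hAB p q) (pow_nonneg (wt_pos p).le r)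
    _ ≤ C := (hBB' q p).trans (hC q p)

lemma summable_wt_pow_mul_norm_fc₂ (hA : SPK A) (r : ℕ) :
    Summable fun x : ℤ × ℤ => (wt x.1 * wt x.2) ^ r * ‖fc₂ A x.1 x.2‖ := by
  obtain ⟨C, hC⟩ := hA.exists_wt_mul_wt_pow_mul_norm_fc₂_le (r + 2)
  have hwt (x : ℤ × ℤ) : 0 < wt x.1 * wt x.2 := mul_pos (wt_pos _) (wt_pos _)
  refine Summable.of_nonneg_of_le (fun x => mul_nonneg (pow_nonneg (hwt x).le _) (norm_nonneg _))
    (fun x => ?_) ((summable_inv_wt_sq.mul_of_nonneg summable_inv_wt_sq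
      (fun _ => by positivity) (fun _ => by positivity)).mul_left C)
  have h := hC x.1 x.2
  rw [← mul_inv, ← mul_pow, ← div_eq_mul_inv, le_div_iff₀ (pow_pos (hwt x) 2)]
  calc _ = (wt x.1 * wt x.2) ^ (r + 2) * ‖fc₂ A x.1 x.2‖ := by ring
    _ ≤ C := h

lemma summable_norm_fc₂ (hA : SPK A) : Summable fun x : ℤ × ℤ => ‖fc₂ A x.1 x.2‖ := by
  simpa using hA.summable_wt_pow_mul_norm_fc₂ 0

lemma hasSum_fc₂ (hA : SPK A) (s t : ℝ) :
    HasSum (fun x : ℤ × ℤ => fc₂ A x.1 x.2 * (mode x.1 s * mode x.2 t)) (A s t) := by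
  have hsum := hA.summable_norm_fc₂
  have hinner (p : ℤ) : HasSum (fun q => fc₂ A p q * mode q t) (fc (Function.swap A t) p) := by
    have hcoeff : fc (fun t => fc (Function.swap A t) p) = fc₂ A p :=
      funext fun q => hA.fc₂_swap p q
    have h := hasSum_fc (hA.swap.continuous_fc p)
      (fun t => by simp only [show Function.swap A (t + 1) = Function.swap A t from
        funext (hA.swap.2.1 t)])
      (hcoeff ▸ (hsum.prod_factor p).of_norm) t
    rwa [hcoeff] at h
  have houter : HasSum (fun p => fc (Function.swap A t) p * mode p s) (A s t) := by
    have hs : Summable fun x : ℤ × ℤ => fc₂ A x.1 x.2 * mode x.2 t :=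
      .of_norm (by simpa [norm_mode] using hsum)
    exact hasSum_fc (hA.swap.continuous_right t) (fun s => hA.2.1 s t)
      (hs.prod.congr fun p => (hinner p).tsum_eq) s
  have hdouble : Summable fun x : ℤ × ℤ => fc₂ A x.1 x.2 * (mode x.1 s * mode x.2 t) :=
    .of_norm (by simpa [norm_mode] using hsum)
  have := hdouble.hasSum.prod_fiberwise fun p =>
    ((hinner p).mul_right (mode p s)).congr_fun fun q => by ring
  exact this.unique houter ▸ hdouble.hasSum

end SPK

/-! ### The logarithmic kernel -/

/-- The 1-periodic function `log (4 sin² (πx))`, written as a sum so that it differs from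
`log (sin² (πx))` by a constant also at the integers, where `Real.log 0 = 0`. -/
noncomputable def logSinSq (x : ℝ) : ℂ := (Real.log (Real.sin (π * x) ^ 2) + Real.log 4 : ℝ)

lemma logSinSq_eq (x : ℝ) :
    logSinSq x = (2 * Real.log (Real.sin (π * x)) + Real.log 4 : ℝ) := by
  rw [logSinSq, Real.log_pow, Nat.cast_ofNat]

lemma periodic_logSinSq : Function.Periodic logSinSq 1 := fun x => by
  simp only [logSinSq, mul_add, mul_one, Real.sin_add_pi, neg_sq]

lemma intervalIntegrable_log_sin_pi_mul (a b : ℝ) :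
    IntervalIntegrable (fun x => Real.log (Real.sin (π * x))) volume a b := by
  simpa [Real.pi_ne_zero] using
    (intervalIntegrable_log_sin (a := π * a) (b := π * b)).comp_mul_left (c := π)

lemma intervalIntegrable_logSinSq (a b : ℝ) : IntervalIntegrable logSinSq volume a b := by
  have h : IntervalIntegrable (fun x => 2 * Real.log (Real.sin (π * x)) + Real.log 4) volume a b :=
    ((intervalIntegrable_log_sin_pi_mul a b).const_mul 2).add intervalIntegrable_const
  simp only [funext logSinSq_eq]
  exact ⟨h.1.ofReal, h.2.ofReal⟩

lemma integral_logSinSq : ∫ x in (0 : ℝ)..1, logSinSq x = 0 := by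
  have hlog : Real.log 4 = 2 * Real.log 2 := by
    rw [show (4 : ℝ) = 2 ^ 2 by norm_num, Real.log_pow, Nat.cast_ofNat]
  simp only [logSinSq_eq]
  rw [intervalIntegral.integral_ofReal, intervalIntegral.integral_add
      ((intervalIntegrable_log_sin_pi_mul 0 1).const_mul 2) intervalIntegrable_const,
    intervalIntegral.integral_const_mul,
    intervalIntegral.integral_comp_mul_left (fun x => Real.log (Real.sin x)) Real.pi_ne_zero]
  simp only [mul_zero, mul_one, integral_log_sin_zero_pi, smul_eq_mul,
    intervalIntegral.integral_const, hlog]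
  rw [ofReal_eq_zero]
  field_simp
  ring

lemma mode_one_eq_sq (x : ℝ) : mode 1 x = exp (π * x * I) ^ 2 := by
  rw [mode, ← exp_nat_mul]; congr 1; push_cast; ring

lemma mode_one_sub_one (x : ℝ) :
    mode 1 x - 1 = 2 * I * exp (π * x * I) * (Real.sin (π * x) : ℂ) := by
  have h : exp (π * x * I) * exp (-(π * x) * I) = 1 := by rw [← exp_add]; simp
  rw [mode_one_eq_sq, ofReal_sin, Complex.sin]
  push_cast
  linear_combination
    h + (exp (π * x * I) ^ 2 - exp (π * x * I) * exp (-(π * x) * I)) * I_sq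

lemma mode_one_add_one (x : ℝ) :
    mode 1 x + 1 = 2 * exp (π * x * I) * (Real.cos (π * x) : ℂ) := by
  have h : exp (π * x * I) * exp (-(π * x) * I) = 1 := by rw [← exp_add]; simp
  rw [mode_one_eq_sq, ofReal_cos, Complex.cos]
  push_cast
  linear_combination -h

lemma mode_one_im (x : ℝ) : (mode 1 x).im = 2 * Real.sin (π * x) * Real.cos (π * x) := by
  rw [← Real.sin_two_mul, ← exp_ofReal_mul_I_im, mode]
  congr 2
  push_cast
  ring

lemma continuous_mode_one_sub_one_mul_logSinSq :
    Continuous fun x => (mode 1 x - 1) * logSinSq x := by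
  have : Continuous fun x => Real.sin (π * x) * Real.log (Real.sin (π * x)) :=
    Real.continuous_mul_log.comp (by fun_prop)
  have heq : (fun x => (mode 1 x - 1) * logSinSq x) = fun x : ℝ => 2 * I * exp (π * x * I) *
      ((2 * (Real.sin (π * x) * Real.log (Real.sin (π * x)))
        + Real.sin (π * x) * Real.log 4 : ℝ) : ℂ) := by
    ext x
    rw [mode_one_sub_one, logSinSq_eq]
    push_cast
    ring
  rw [heq]
  fun_prop

lemma continuous_mode_sub_one_mul {f : ℝ → ℂ} (h : Continuous fun x => (mode 1 x - 1) * f x)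
    (q : ℤ) : Continuous fun x => (mode q x - 1) * f x := by
  induction q with
  | zero => simpa [mode_zero_left] using continuous_const
  | succ q ih =>
    have hsucc : (fun x => (mode (q + 1) x - 1) * f x) = fun x =>
        mode 1 x * ((mode q x - 1) * f x) + (mode 1 x - 1) * f x := by
      ext x; rw [mode_add_left]; ring
    rw [hsucc]
    fun_prop
  | pred q ih =>
    have hpred : (fun x => (mode (-q - 1) x - 1) * f x) = fun x =>
        mode (-1) x * ((mode (-q) x - 1) * f x - (mode 1 x - 1) * f x) := by
      ext x
      have := inv_mul_cancel₀ (mode_ne_zero 1 x)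
      rw [sub_eq_add_neg (-(q : ℤ)) 1, mode_add_left, mode_neg_left 1]
      linear_combination f x * this
    rw [hpred]
    fun_prop

lemma sin_pi_mul_pos {x : ℝ} (hx : x ∈ Set.Ioo (0 : ℝ) 1) : 0 < Real.sin (π * x) :=
  Real.sin_pos_of_pos_of_lt_pi (mul_pos Real.pi_pos hx.1) (by nlinarith [hx.2, Real.pi_pos])

-- Differentiating `log sin²` produces the cotangent `i (mode 1 + 1) / (mode 1 - 1)`.
lemma hasDerivAt_mode_one_sub_one_mul_logSinSq {x : ℝ} (hx : x ∈ Set.Ioo (0 : ℝ) 1) :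
    HasDerivAt (fun x => (mode 1 x - 1) * logSinSq x)
      (2 * π * I * (mode 1 x * logSinSq x + (mode 1 x + 1))) x := by
  have hs := (sin_pi_mul_pos hx).ne'
  have hpi : HasDerivAt (fun x : ℝ => π * x) π x := by
    simpa using (hasDerivAt_id x).const_mul π
  have hlog := (((hpi.sin.log hs).const_mul 2).add_const (Real.log 4)).ofReal_comp
  simp only [← logSinSq_eq] at hlog
  refine (((hasDerivAt_mode 1 x).sub_const 1).mul hlog).congr_deriv ?_
  have hs' : (Real.sin (π * x) : ℂ) ≠ 0 := by exact_mod_cast hs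
  rw [mode_one_sub_one, mode_one_add_one]
  push_cast [-ofReal_sin, -ofReal_cos]
  field_simp

lemma fc_logSinSq_recurrence (n : ℤ) :
    ((n : ℂ) - 1) * fc logSinSq (n - 1) =
      n * fc logSinSq n + (if n = 1 then 1 else 0) + if n = 0 then 1 else 0 := by
  have hderiv : ∀ x ∈ Set.Ioo (0 : ℝ) 1,
      HasDerivAt (fun x => (mode 1 x - 1) * logSinSq x * mode (-n) x)
        (2 * π * I * ((1 - n) * (logSinSq x * mode (-(n - 1)) x) + n * (logSinSq x * mode (-n) x)
          + (mode (1 - n) x + mode (-n) x))) x := fun x hx => by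
    refine ((hasDerivAt_mode_one_sub_one_mul_logSinSq hx).mul
      (hasDerivAt_mode (-n) x)).congr_deriv ?_
    rw [neg_sub, sub_eq_add_neg 1 n, mode_add_left]
    push_cast
    ring
  have hint (m : ℤ) : IntervalIntegrable (fun x => logSinSq x * mode m x) volume 0 1 :=
    (intervalIntegrable_logSinSq 0 1).mul_continuousOn (by fun_prop)
  have hmode (m : ℤ) : IntervalIntegrable (mode m) volume 0 1 :=
    (continuous_mode m).intervalIntegrable _ _
  have hFTC := intervalIntegral.integral_eq_sub_of_hasDerivAt_of_le zero_le_one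
    (continuous_mode_one_sub_one_mul_logSinSq.mul (continuous_mode (-n))).continuousOn hderiv
    (((((hint _).const_mul _).add ((hint _).const_mul _)).add
      ((hmode _).add (hmode _))).const_mul _)
  rw [intervalIntegral.integral_const_mul, intervalIntegral.integral_add
      (((hint _).const_mul _).add ((hint _).const_mul _)) ((hmode _).add (hmode _)),
    intervalIntegral.integral_add ((hint _).const_mul _) ((hint _).const_mul _),
    intervalIntegral.integral_add (hmode _) (hmode _), intervalIntegral.integral_const_mul,
    intervalIntegral.integral_const_mul, ← fc_eq_integral_mode, ← fc_eq_integral_mode,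
    integral_mode, integral_mode] at hFTC
  have hends : mode 1 1 = 1 := by simpa using mode_intCast 1 1
  have hpi : (2 * π * I : ℂ) ≠ 0 := by simp [Real.pi_ne_zero]
  simp only [Pi.mul_apply, hends, mode_zero_right, sub_self, zero_mul, mul_eq_zero, hpi,
    false_or, sub_eq_zero, neg_eq_zero, eq_comm (a := (1 : ℤ))] at hFTC
  linear_combination -hFTC

lemma mul_fc_logSinSq (n : ℤ) : (n : ℂ) * fc logSinSq n = -(n.sign : ℂ) := by
  induction n with
  | zero => simp
  | succ n ih =>
    have h := fc_logSinSq_recurrence (n + 1)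
    rcases Nat.eq_zero_or_pos n with rfl | hn
    · simp only [Nat.cast_zero, zero_add, Int.cast_one, sub_self, zero_mul, one_mul, ↓reduceIte,
        one_ne_zero, add_zero, Int.sign_one] at h ⊢
      linear_combination -h
    · rw [Int.sign_eq_one_of_pos (by omega)] at ih ⊢
      simp only [Int.cast_add, Int.cast_natCast, Int.cast_one, add_sub_cancel_right, add_eq_right,
        Int.natCast_eq_zero, hn.ne', ↓reduceIte, add_zero, show (n : ℤ) + 1 ≠ 0 by omega]
        at h ih ⊢
      linear_combination ih - h
  | pred n ih =>
    have h := fc_logSinSq_recurrence (-n)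
    rw [Int.sign_eq_neg_one_of_neg (by omega : -(n : ℤ) - 1 < 0)]
    rcases Nat.eq_zero_or_pos n with rfl | hn
    · simp only [Nat.cast_zero, neg_zero, Int.cast_zero, zero_sub, neg_mul, one_mul, zero_mul,
        zero_ne_one, ↓reduceIte, add_zero, zero_add, Int.cast_neg, Int.cast_one, neg_neg] at h ⊢
      linear_combination h
    · rw [Int.sign_eq_neg_one_of_neg (by omega)] at ih
      simp only [Int.cast_neg, Int.cast_natCast, neg_mul, show -(n : ℤ) ≠ 1 by omega, ↓reduceIte,
        add_zero, neg_eq_zero, Int.natCast_eq_zero, hn.ne', Int.cast_one, neg_neg, Int.cast_sub]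
        at h ih ⊢
      linear_combination h + ih

lemma fc_logSinSq (n : ℤ) : fc logSinSq n = -((|(n : ℝ)|⁻¹ : ℝ) : ℂ) := by
  rcases eq_or_ne n 0 with rfl | hn
  · simp [fc_eq_integral_mode, mode_zero_left, integral_logSinSq]
  · have h := mul_fc_logSinSq n
    have hn' : (n : ℂ) ≠ 0 := by exact_mod_cast hn
    rcases lt_or_gt_of_ne hn with hneg | hpos
    · rw [abs_of_neg (by exact_mod_cast hneg)]
      rw [Int.sign_eq_neg_one_of_neg hneg] at h
      push_cast at h ⊢
      field_simp
      linear_combination h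
    · rw [abs_of_pos (by exact_mod_cast hpos)]
      rw [Int.sign_eq_one_of_pos hpos] at h
      push_cast at h ⊢
      field_simp
      linear_combination h

lemma wt_le_two_mul_abs {n : ℤ} (hn : n ≠ 0) : wt n ≤ 2 * |(n : ℝ)| := by
  have : (1 : ℝ) ≤ |(n : ℝ)| := by exact_mod_cast Int.one_le_abs hn
  rw [wt]
  linarith

lemma inv_abs_intCast_le_one (n : ℤ) : |(n : ℝ)|⁻¹ ≤ 1 := by
  rcases eq_or_ne n 0 with rfl | hn
  · simp
  · exact inv_le_one_of_one_le₀ (by exact_mod_cast Int.one_le_abs hn)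

lemma norm_fc_logSinSq_sub_le (n q : ℤ) :
    ‖fc logSinSq (n - q) - fc logSinSq n‖ ≤ 4 * wt q ^ 2 * (wt n ^ 2)⁻¹ := by
  rw [fc_logSinSq, fc_logSinSq, ← ofReal_neg, ← ofReal_neg, ← ofReal_sub, norm_real,
    Real.norm_eq_abs, ← div_eq_mul_inv, le_div_iff₀ (pow_pos (wt_pos n) 2), neg_sub_neg]
  have hwq := one_le_wt q
  rcases eq_or_ne n 0 with rfl | hn
  · have := inv_abs_intCast_le_one q
    simp only [wt, zero_sub, Int.cast_neg, Int.cast_zero, abs_zero, abs_neg, inv_zero, abs_inv,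
      abs_abs, add_zero, one_pow, mul_one]
    nlinarith [abs_nonneg (q : ℝ)]
  rcases eq_or_ne n q with rfl | hnq
  · have := inv_abs_intCast_le_one n
    simp only [sub_self, Int.cast_zero, abs_zero, inv_zero, sub_zero, abs_inv, abs_abs]
    nlinarith [sq_nonneg (wt n)]
  have hm : n - q ≠ 0 := sub_ne_zero.2 hnq
  have hn' : 0 < |(n : ℝ)| := by simpa using hn
  have hm' : 0 < |((n - q : ℤ) : ℝ)| := abs_pos.2 (by exact_mod_cast hm)
  have hdiff : |(|((n - q : ℤ) : ℝ)| - |(n : ℝ)|)| ≤ wt q :=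
    (abs_abs_sub_abs_le _ _).trans (by simpa using abs_le_wt q)
  have hwt : wt n ≤ wt q * (2 * |((n - q : ℤ) : ℝ)|) :=
    (wt_le_mul_wt_sub n q).trans
      (mul_le_mul_of_nonneg_left (wt_le_two_mul_abs hm) (wt_pos q).le)
  rw [inv_sub_inv hn'.ne' hm'.ne', abs_div, abs_of_pos (mul_pos hn' hm'), div_mul_eq_mul_div,
    div_le_iff₀ (mul_pos hn' hm')]
  calc |(|((n - q : ℤ) : ℝ)| - |(n : ℝ)|)| * wt n ^ 2
      ≤ wt q * ((2 * |(n : ℝ)|) * (wt q * (2 * |((n - q : ℤ) : ℝ)|))) := by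
        rw [sq]
        exact mul_le_mul hdiff (mul_le_mul (wt_le_two_mul_abs hn) hwt (wt_pos n).le (by positivity))
          (mul_self_nonneg _) (wt_pos q).le
    _ = 4 * wt q ^ 2 * (|(n : ℝ)| * |((n - q : ℤ) : ℝ)|) := by ring

/-! ### Grid coefficients and aliasing -/

section Grid

variable (N : ℕ) (ε : ℝ)

/-- The discrete Fourier coefficient of `f` of frequency `n`, computed by the quadrature rule on
the shifted uniform grid `(j + ε) / N`, `0 ≤ j < N`. -/
noncomputable def gridCoeff (f : ℝ → ℂ) (n : ℤ) : ℂ :=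
  (N : ℂ)⁻¹ * ∑ j ∈ Finset.range N, f ((j + ε) / N) * mode (-n) ((j + ε) / N)

lemma gridCoeff_mode_sub_one_mul (f : ℝ → ℂ) (q n : ℤ) :
    gridCoeff N ε (fun x => (mode q x - 1) * f x) n
      = gridCoeff N ε f (n - q) - gridCoeff N ε f n := by
  simp only [gridCoeff, ← mul_sub, ← Finset.sum_sub_distrib]
  congr! 2 with j
  rw [neg_sub, sub_eq_add_neg q n, mode_add_left]
  ring

lemma mode_add_div (n : ℤ) (j : ℕ) :
    mode n ((j + ε) / N) = mode n (ε / N) * (mode 1 (1 / N) ^ j) ^ n := by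
  have h : ((j : ℝ) + ε) / N = ε / N + (j : ℤ) * (1 / N) := by push_cast; ring
  rw [h, mode_add_right, mode_intCast_mul, mode_eq_zpow (n * j), mul_comm n, zpow_mul,
    zpow_natCast]

variable [NeZero N]

lemma isPrimitiveRoot_mode_one_div : IsPrimitiveRoot (mode 1 (1 / N)) N := by
  have h := Complex.isPrimitiveRoot_exp N (NeZero.ne N)
  rwa [show 2 * π * I / N = 2 * π * I * (1 : ℤ) * ((1 / N : ℝ) : ℂ) by push_cast; ring] at h

lemma mode_one_add_div_pow (j : ℕ) : mode 1 ((j + ε) / N) ^ N = mode 1 ε := by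
  have hN : (N : ℝ) ≠ 0 := NeZero.ne _
  have h : (N : ℤ) * (((j : ℝ) + ε) / N) = (j : ℤ) + ε := by push_cast; field_simp
  have := mode_intCast_mul 1 N (((j : ℝ) + ε) / N)
  rw [one_mul, mode_eq_zpow N, zpow_natCast, h, mode_add_right, mode_intCast, one_mul] at this
  exact this.symm

lemma sum_mode_add_div (n : ℤ) :
    ∑ j ∈ Finset.range N, mode n ((j + ε) / N)
      = if (N : ℤ) ∣ n then (N : ℂ) * mode n (ε / N) else 0 := by
  have hζ := isPrimitiveRoot_mode_one_div N
  simp only [mode_add_div, ← Finset.mul_sum, ← zpow_natCast, ← zpow_mul, mul_comm _ n]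
  simp only [zpow_mul, zpow_natCast]
  split_ifs with h
  · rw [(hζ.zpow_eq_one_iff_dvd n).2 h]
    simp [mul_comm]
  · have hne : mode 1 (1 / N) ^ n ≠ 1 := mt (hζ.zpow_eq_one_iff_dvd n).1 h
    rw [geom_sum_eq hne, ← zpow_natCast, zpow_comm, zpow_natCast, hζ.pow_eq_one]
    simp

lemma gridCoeff_mode (m n : ℤ) :
    gridCoeff N ε (mode m) n = if (N : ℤ) ∣ m - n then mode (m - n) (ε / N) else 0 := by
  have hN : (N : ℂ) ≠ 0 := NeZero.ne _
  simp only [gridCoeff, ← mode_add_left, ← sub_eq_add_neg, sum_mode_add_div]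
  split_ifs
  · rw [inv_mul_cancel_left₀ hN]
  · rw [mul_zero]

lemma norm_gridCoeff_mode_le (m n : ℤ) : ‖gridCoeff N ε (mode m) n‖ ≤ 1 := by
  rw [gridCoeff_mode]
  split_ifs <;> simp [norm_mode]

lemma gridCoeff_one (n : ℤ) :
    gridCoeff N ε (fun _ => 1) n = if (N : ℤ) ∣ n then mode (-n) (ε / N) else 0 := by
  have h : (fun _ : ℝ => (1 : ℂ)) = mode 0 := funext fun x => (mode_zero_left x).symm
  simp only [h, gridCoeff_mode, zero_sub, dvd_neg]

lemma prod_one_sub_mode_add_div :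
    ∏ j ∈ Finset.range N, (1 - mode 1 ((j + ε) / N)) = 1 - mode 1 ε := by
  have hroot : mode 1 (ε / N) ^ N = mode 1 ε := by simpa using mode_one_add_div_pow N ε 0
  have h := congrArg (Polynomial.eval 1) (X_pow_sub_C_eq_prod (isPrimitiveRoot_mode_one_div N)
    (NeZero.pos N) hroot)
  simpa [Polynomial.eval_prod, mode_add_div, mul_comm] using h.symm

end Grid

section Aliasing

variable {N : ℕ} {ε : ℝ} {f : ℝ → ℂ} {c : ℤ → ℂ}

lemma hasSum_gridCoeff (hf : ∀ x, HasSum (fun m => c m * mode m x) (f x)) (n : ℤ) :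
    HasSum (fun m => c m * gridCoeff N ε (mode m) n) (gridCoeff N ε f n) := by
  refine ((hasSum_sum (s := Finset.range N) fun j _ =>
    (hf ((j + ε) / N)).mul_right (mode (-n) ((j + ε) / N))).mul_left (N : ℂ)⁻¹).congr_fun
      fun m => ?_
  simp only [gridCoeff, Finset.mul_sum]
  exact Finset.sum_congr rfl fun j _ => by ring

lemma norm_gridCoeff_le_tsum [NeZero N] (hf : ∀ x, HasSum (fun m => c m * mode m x) (f x))
    (hc : Summable fun m => ‖c m‖) {r n : ℤ} (hr : (N : ℤ) ∣ r - n) :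
    ‖gridCoeff N ε f n‖ ≤ ∑' t : ℤ, ‖c (r + N * t)‖ := by
  have hinj : Function.Injective fun t : ℤ => r + N * t := fun a b h => by
    simpa [NeZero.ne N] using h
  have hsupp : ∀ m ∉ Set.range fun t : ℤ => r + N * t,
      c m * gridCoeff N ε (mode m) n = 0 := fun m hm => by
    rw [gridCoeff_mode, if_neg, mul_zero]
    rintro hdvd
    obtain ⟨t, ht⟩ := dvd_sub hdvd hr
    exact hm ⟨t, by simp only; linarith⟩
  have hsum := (hinj.hasSum_iff hsupp).2 (hasSum_gridCoeff hf n)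
  exact hsum.norm_le_of_bounded (hc.comp_injective hinj).hasSum fun t => by
    simpa using mul_le_mul_of_nonneg_left (norm_gridCoeff_mode_le N ε (r + N * t) n)
      (norm_nonneg (c (r + N * t)))

lemma tendsto_gridCoeff_mode (ε : ℝ) (m n : ℤ) :
    Tendsto (fun N => gridCoeff N ε (mode m) n) atTop (𝓝 (if m = n then 1 else 0)) := by
  refine tendsto_const_nhds.congr' ?_
  filter_upwards [eventually_gt_atTop (m - n).natAbs] with N hN
  have : NeZero N := ⟨by omega⟩
  have hdvd : (N : ℤ) ∣ m - n ↔ m = n := by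
    refine ⟨fun h => ?_, fun h => by simp [h]⟩
    by_contra hne
    exact absurd (Int.natAbs_le_of_dvd_ne_zero h (sub_ne_zero.2 hne)) (by simpa using hN)
  rw [gridCoeff_mode]
  by_cases h : m = n <;> simp [hdvd, h, mode_zero_left]

lemma tendsto_gridCoeff (hf : ∀ x, HasSum (fun m => c m * mode m x) (f x))
    (hc : Summable fun m => ‖c m‖) (ε : ℝ) (n : ℤ) :
    Tendsto (fun N => gridCoeff N ε f n) atTop (𝓝 (c n)) := by
  have h := tendsto_tsum_of_dominated_convergence (𝓕 := atTop) hc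
    (fun m => (tendsto_gridCoeff_mode ε m n).const_mul (c m))
    (by
      filter_upwards [eventually_gt_atTop 0] with N hN m
      have : NeZero N := ⟨hN.ne'⟩
      simpa using mul_le_mul_of_nonneg_left (norm_gridCoeff_mode_le N ε m n) (norm_nonneg (c m)))
  simpa [(hasSum_gridCoeff hf n).tsum_eq] using h

end Aliasing

/-! ### Grid coefficients of the logarithm -/

lemma fc_mode_sub_one_mul {f : ℝ → ℂ} (hf : IntervalIntegrable f volume 0 1) (q n : ℤ) :
    fc (fun x => (mode q x - 1) * f x) n = fc f (n - q) - fc f n := by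
  simp only [fc_eq_integral_mode]
  rw [← intervalIntegral.integral_sub (hf.mul_continuousOn (by fun_prop))
    (hf.mul_continuousOn (by fun_prop))]
  congr! 2 with x
  rw [neg_sub, sub_eq_add_neg q n, mode_add_left]
  ring

lemma summable_norm_fc_logSinSq_sub (q : ℤ) :
    Summable fun n => ‖fc logSinSq (n - q) - fc logSinSq n‖ :=
  .of_nonneg_of_le (fun _ => norm_nonneg _) (fun n => norm_fc_logSinSq_sub_le n q)
    (summable_inv_wt_sq.mul_left _)

-- `logSinSq` itself has no absolutely convergent Fourier series; multiplying by `mode q - 1`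
-- cancels the singularity.
lemma hasSum_mode_sub_one_mul_logSinSq (q : ℤ) (x : ℝ) :
    HasSum (fun n => (fc logSinSq (n - q) - fc logSinSq n) * mode n x)
      ((mode q x - 1) * logSinSq x) := by
  have hcoeff := fc_mode_sub_one_mul (intervalIntegrable_logSinSq 0 1) q
  simp only [← hcoeff]
  refine hasSum_fc (f := fun x => (mode q x - 1) * logSinSq x)
    (continuous_mode_sub_one_mul continuous_mode_one_sub_one_mul_logSinSq q)
    (fun x => by simp only [mode_add_one, periodic_logSinSq x]) ?_ x
  exact .of_norm (by simpa only [hcoeff] using summable_norm_fc_logSinSq_sub q)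

lemma wt_mul_wt_le {N : ℕ} [NeZero N] {r : ℤ} (hr : 2 * |(r : ℝ)| ≤ N) (t : ℤ) :
    wt r * wt t ≤ 4 * wt (r + N * t) := by
  rcases eq_or_ne t 0 with rfl | ht
  · simpa [wt] using by nlinarith [abs_nonneg (r : ℝ)]
  · have hN : (1 : ℝ) ≤ N := by exact_mod_cast NeZero.pos N
    have ht : (1 : ℝ) ≤ |(t : ℝ)| := by exact_mod_cast Int.one_le_abs ht
    have habs : N * |(t : ℝ)| - |(r : ℝ)| ≤ |(r : ℝ) + N * t| := by
      have := abs_sub_abs_le_abs_add (N * t : ℝ) r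
      rwa [abs_mul, Nat.abs_cast, add_comm] at this
    simp only [wt, Int.cast_add, Int.cast_mul, Int.cast_natCast]
    nlinarith [abs_nonneg (r : ℝ)]

lemma two_mul_abs_bmod_le (m : ℤ) (N : ℕ) [NeZero N] : 2 * |((m.bmod N : ℤ) : ℝ)| ≤ N := by
  have h1 := Int.le_bmod (x := m) (NeZero.pos N)
  have h2 := Int.bmod_lt (x := m) (NeZero.pos N)
  have : 2 * |m.bmod N| ≤ N := by rcases abs_cases (m.bmod N) with h | h <;> omega
  exact_mod_cast this

lemma exists_norm_gridCoeff_logSinSq_sub_le : ∃ C, ∀ (N : ℕ) [NeZero N] (ε : ℝ) (m q : ℤ),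
    ‖gridCoeff N ε logSinSq (m - q) - gridCoeff N ε logSinSq m‖
      ≤ C * wt q ^ 2 * (wt (m.bmod N) ^ 2)⁻¹ := by
  refine ⟨64 * ∑' t : ℤ, (wt t ^ 2)⁻¹, fun N _ ε m q => ?_⟩
  set r := m.bmod N with hr
  have hdvd : (N : ℤ) ∣ r - m := by
    rw [hr, Int.bmod_eq_self_sub_mul_bdiv]
    exact ⟨-m.bdiv N, by ring⟩
  have hterm (t : ℤ) : ‖fc logSinSq (r + N * t - q) - fc logSinSq (r + N * t)‖
      ≤ 64 * wt q ^ 2 * (wt r ^ 2)⁻¹ * (wt t ^ 2)⁻¹ := by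
    have hwt := wt_mul_wt_le (two_mul_abs_bmod_le m N) t
    have hpos := mul_pos (wt_pos r) (wt_pos t)
    calc _ ≤ 4 * wt q ^ 2 * (wt (r + N * t) ^ 2)⁻¹ := norm_fc_logSinSq_sub_le _ q
      _ ≤ 4 * wt q ^ 2 * ((wt r * wt t / 4) ^ 2)⁻¹ := by
        gcongr
        linarith
      _ = _ := by field_simp; ring
  rw [← gridCoeff_mode_sub_one_mul]
  calc _ ≤ ∑' t : ℤ, ‖fc logSinSq (r + N * t - q) - fc logSinSq (r + N * t)‖ :=
        norm_gridCoeff_le_tsum (hasSum_mode_sub_one_mul_logSinSq q)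
          (summable_norm_fc_logSinSq_sub q) hdvd
    _ ≤ ∑' t : ℤ, 64 * wt q ^ 2 * (wt r ^ 2)⁻¹ * (wt t ^ 2)⁻¹ :=
        Summable.tsum_le_tsum hterm (.of_nonneg_of_le (fun _ => norm_nonneg _) hterm
          (summable_inv_wt_sq.mul_left _)) (summable_inv_wt_sq.mul_left _)
    _ = _ := by rw [tsum_mul_left]; ring

lemma one_sub_mode_one_ne_zero_iff {x : ℝ} : 1 - mode 1 x ≠ 0 ↔ Real.sin (π * x) ≠ 0 := by
  rw [← neg_sub, mode_one_sub_one, neg_ne_zero, mul_ne_zero_iff, ofReal_ne_zero]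
  simp

lemma logSinSq_eq_log_norm {x : ℝ} (hx : Real.sin (π * x) ≠ 0) :
    logSinSq x = (2 * Real.log ‖1 - mode 1 x‖ : ℝ) := by
  have h : ‖1 - mode 1 x‖ ^ 2 = Real.sin (π * x) ^ 2 * 4 := by
    have hexp : ‖exp (π * x * I)‖ = 1 := by exact_mod_cast norm_exp_ofReal_mul_I (π * x)
    rw [norm_sub_rev, mode_one_sub_one, norm_mul, norm_mul, norm_mul, norm_I, hexp, norm_real,
      mul_pow, mul_pow, mul_pow, Real.norm_eq_abs, sq_abs, norm_ofNat]
    ring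
  rw [logSinSq, ← Real.log_mul (pow_ne_zero 2 hx) (by norm_num), ← h, Real.log_pow, Nat.cast_ofNat]

lemma gridCoeff_logSinSq_zero {N : ℕ} [NeZero N] {ε : ℝ} (hε : Real.sin (π * ε) ≠ 0) :
    gridCoeff N ε logSinSq 0 = (N : ℂ)⁻¹ * logSinSq ε := by
  have hprod := congrArg norm (prod_one_sub_mode_add_div N ε)
  rw [norm_prod] at hprod
  have hne : ∏ j ∈ Finset.range N, ‖1 - mode 1 ((j + ε) / N)‖ ≠ 0 := by
    rw [hprod, norm_ne_zero_iff]
    exact one_sub_mode_one_ne_zero_iff.2 hε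
  have hsin : ∀ j ∈ Finset.range N, Real.sin (π * ((j + ε) / N)) ≠ 0 := fun j hj =>
    one_sub_mode_one_ne_zero_iff.1 (norm_ne_zero_iff.1 (Finset.prod_ne_zero_iff.1 hne j hj))
  rw [gridCoeff, logSinSq_eq_log_norm hε, ← hprod, Real.log_prod (Finset.prod_ne_zero_iff.1 hne),
    Finset.mul_sum (a := (2 : ℝ)), ofReal_sum]
  congr 1
  refine Finset.sum_congr rfl fun j hj => ?_
  rw [logSinSq_eq_log_norm (hsin j hj), neg_zero, mode_zero_left, mul_one]

lemma tendsto_gridCoeff_logSinSq {ε : ℝ} (hε : Real.sin (π * ε) ≠ 0) (n : ℤ) :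
    Tendsto (fun N => gridCoeff N ε logSinSq n) atTop (𝓝 (fc logSinSq n)) := by
  have hzero : Tendsto (fun N => gridCoeff N ε logSinSq 0) atTop (𝓝 (fc logSinSq 0)) := by
    have h : Tendsto (fun N : ℕ => (N : ℂ)⁻¹ * logSinSq ε) atTop (𝓝 (0 * logSinSq ε)) :=
      tendsto_inv_atTop_nhds_zero_nat.mul_const _
    rw [zero_mul] at h
    rw [fc_logSinSq, Int.cast_zero, abs_zero, inv_zero, ofReal_zero, neg_zero]
    refine h.congr' ?_
    filter_upwards [eventually_gt_atTop 0] with N hN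
    have : NeZero N := ⟨hN.ne'⟩
    rw [gridCoeff_logSinSq_zero hε]
  have hdiff := tendsto_gridCoeff (hasSum_mode_sub_one_mul_logSinSq (-n))
    (summable_norm_fc_logSinSq_sub (-n)) ε 0
  simpa [gridCoeff_mode_sub_one_mul] using hdiff.add hzero

/-! ### A lower bound for the grid coefficients of the logarithm -/

lemma gridCoeff_conj (N : ℕ) (ε : ℝ) (f : ℝ → ℂ) (n : ℤ) :
    gridCoeff N ε (fun x => (starRingEnd ℂ) (f x)) n = (starRingEnd ℂ) (gridCoeff N ε f (-n)) := by
  simp [gridCoeff, conj_mode]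

lemma gridCoeff_sub_natCast (N : ℕ) [NeZero N] (ε : ℝ) (f : ℝ → ℂ) (n : ℤ) :
    gridCoeff N ε f (n - N) = mode 1 ε * gridCoeff N ε f n := by
  simp only [gridCoeff, mul_left_comm (mode 1 ε), Finset.mul_sum]
  refine Finset.sum_congr rfl fun j _ => ?_
  rw [neg_sub, sub_eq_add_neg, mode_add_left, mode_eq_zpow N, zpow_natCast, mode_one_add_div_pow]

lemma one_sub_ofReal_mul_mem_slitPlane {z : ℂ} (hz : z.im ≠ 0) (r : ℝ) :
    1 - r * z ∈ slitPlane := by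
  rcases eq_or_ne r 0 with rfl | hr
  · simp [one_mem_slitPlane]
  · exact mem_slitPlane_iff.2 (.inr (by simp [hr, hz]))

lemma continuous_div_one_sub_ofReal_mul {z : ℂ} (hz : z.im ≠ 0) :
    Continuous fun r : ℝ => z / (1 - r * z) :=
  Continuous.div (by fun_prop) (by fun_prop) fun r =>
    slitPlane_ne_zero (one_sub_ofReal_mul_mem_slitPlane hz r)

lemma integral_div_one_sub_ofReal_mul {z : ℂ} (hz : z.im ≠ 0) :
    ∫ r in (0 : ℝ)..1, z / (1 - r * z) = -log (1 - z) := by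
  have hderiv : ∀ r ∈ Set.uIcc (0 : ℝ) 1,
      HasDerivAt (fun r : ℝ => -log (1 - r * z)) (z / (1 - r * z)) r := fun r _ =>
    (((ofRealCLM.hasDerivAt (x := r)).mul_const z).const_sub 1 |>.clog_real
      (one_sub_ofReal_mul_mem_slitPlane hz r)).neg.congr_deriv (by simp [neg_div])
  rw [intervalIntegral.integral_eq_sub_of_hasDerivAt hderiv
    ((continuous_div_one_sub_ofReal_mul hz).intervalIntegrable _ _)]
  simp

/-- The geometric series `∑ r ^ l e^{2πi(l+1)x}`, whose integral over `r ∈ [0, 1]` is the analytic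
half of `-logSinSq`. -/
noncomputable def geomMode (r x : ℝ) : ℂ := mode 1 x / (1 - r * mode 1 x)

lemma logSinSq_eq_neg_integral {x : ℝ} (hx : (mode 1 x).im ≠ 0) :
    logSinSq x = -∫ r in (0 : ℝ)..1, geomMode r x + (starRingEnd ℂ) (geomMode r x) := by
  have hcont := continuous_div_one_sub_ofReal_mul hx
  have hsin : Real.sin (π * x) ≠ 0 := one_sub_mode_one_ne_zero_iff.1 fun h =>
    hx (by rw [← sub_eq_zero.1 h, one_im])
  have hcont_conj : Continuous fun r : ℝ => (starRingEnd ℂ) (mode 1 x / (1 - r * mode 1 x)) :=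
    continuous_conj.comp hcont
  have hconj := (conjCLE.toContinuousLinearMap).intervalIntegral_comp_comm
    (hcont.intervalIntegrable (μ := volume) 0 1)
  simp only [ContinuousLinearEquiv.coe_coe, conjCLE_apply] at hconj
  simp only [geomMode]
  rw [intervalIntegral.integral_add (hcont.intervalIntegrable _ _)
    (hcont_conj.intervalIntegrable _ _), hconj,
    integral_div_one_sub_ofReal_mul hx, add_conj, logSinSq_eq_log_norm hsin, neg_re, log_re]
  push_cast
  ring

lemma sq_re_mul_le_re_mul_re_div {w : ℂ} (hw : ‖w‖ = 1) {ρ : ℝ} (h0 : 0 ≤ ρ) (h1 : ρ ≤ 1) :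
    w.re ^ 2 * (1 - ρ) / 4 ≤ w.re * (w / (1 - ρ * w ^ 2)).re := by
  set d := 1 - ρ * w ^ 2 with hd
  have hnorm : normSq d ≤ 4 := by
    have : ‖d‖ ≤ 2 := by
      refine (norm_sub_le _ _).trans ?_
      rw [norm_mul, norm_pow, hw, norm_real, Real.norm_of_nonneg h0, norm_one]
      linarith
    rw [normSq_eq_norm_sq]
    nlinarith [norm_nonneg d]
  have hconj : w * (starRingEnd ℂ) w = 1 := by rw [mul_conj']; simp [hw]
  have hre : (w / d).re = (1 - ρ) * w.re / normSq d := by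
    have : w * (starRingEnd ℂ) d = w - ρ * (starRingEnd ℂ) w := by
      simp only [hd, map_sub, map_one, map_mul, conj_ofReal, map_pow]
      linear_combination -ρ * (starRingEnd ℂ) w * hconj
    rw [div_eq_mul_inv, inv_def, ← mul_assoc, this, mul_comm, re_ofReal_mul, sub_re,
      re_ofReal_mul, conj_re]
    ring
  rcases (normSq_nonneg d).eq_or_lt with h | h
  · have hρ : ρ = 1 := by
      have : (ρ : ℂ) * w ^ 2 = 1 := by rw [← sub_eq_zero, ← neg_eq_zero, neg_sub, ← hd]
                                       exact normSq_eq_zero.1 h.symm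
      simpa [hw, abs_of_nonneg h0] using congrArg norm this
    simp [hre, hρ]
  · calc w.re ^ 2 * (1 - ρ) / 4 ≤ w.re ^ 2 * (1 - ρ) / normSq d :=
        div_le_div_of_nonneg_left (mul_nonneg (sq_nonneg _) (by linarith)) h hnorm
      _ = w.re * (w / d).re := by rw [hre]; ring

section LowerBound

variable {N : ℕ} [NeZero N] {ε : ℝ}

lemma im_mode_one_add_div_ne_zero (hε : (mode 1 ε).im ≠ 0) (j : ℕ) :
    (mode 1 ((j + ε) / N)).im ≠ 0 := fun h => by
  have hre : mode 1 ((j + ε) / N) = ((mode 1 ((j + ε) / N)).re : ℂ) := ext rfl (by simpa using h)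
  rw [← mode_one_add_div_pow N ε j, hre, ← ofReal_pow, ofReal_im] at hε
  exact hε rfl

lemma geomMode_add_div (hε : (mode 1 ε).im ≠ 0) (r : ℝ) (j : ℕ) :
    geomMode r ((j + ε) / N) = ∑ l ∈ Finset.range N,
      (r : ℂ) ^ l / (1 - (r : ℂ) ^ N * mode 1 ε) * mode (l + 1) ((j + ε) / N) := by
  set z := mode 1 ((j + ε) / N) with hz
  have hzN : z ^ N = mode 1 ε := mode_one_add_div_pow N ε j
  have hne := slitPlane_ne_zero
    (one_sub_ofReal_mul_mem_slitPlane (im_mode_one_add_div_ne_zero (N := N) hε j) r)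
  have hneN := slitPlane_ne_zero (one_sub_ofReal_mul_mem_slitPlane hε (r ^ N))
  rw [ofReal_pow] at hneN
  have hmode (l : ℕ) : mode (l + 1) ((j + ε) / N) = z ^ l * z := by
    rw [hz, mode_add_left, mode_eq_zpow l, zpow_natCast]
  have hgeom := geom_sum_mul_neg ((r : ℂ) * z) N
  rw [mul_pow, hzN] at hgeom
  calc geomMode r ((j + ε) / N)
      = (∑ l ∈ Finset.range N, (r * z) ^ l) * z / (1 - (r : ℂ) ^ N * mode 1 ε) := by
        rw [geomMode, ← hz, div_eq_div_iff hne hneN, ← hgeom]; ring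
    _ = _ := by
        rw [Finset.sum_mul, Finset.sum_div]
        exact Finset.sum_congr rfl fun l _ => by rw [hmode, mul_pow]; ring

lemma gridCoeff_geomMode (hε : (mode 1 ε).im ≠ 0) (r : ℝ) {k : ℕ} (hk : 0 < k)
    (hkN : k ≤ N) :
    gridCoeff N ε (geomMode r) k = (r : ℂ) ^ (k - 1) / (1 - (r : ℂ) ^ N * mode 1 ε) := by
  have hexpand : gridCoeff N ε (geomMode r) k = ∑ l ∈ Finset.range N,
      (r : ℂ) ^ l / (1 - (r : ℂ) ^ N * mode 1 ε) * gridCoeff N ε (mode (l + 1)) k := by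
    simp only [gridCoeff, geomMode_add_div hε, Finset.sum_mul, Finset.mul_sum]
    rw [Finset.sum_comm]
    exact Finset.sum_congr rfl fun l _ => Finset.sum_congr rfl fun j _ => by ring
  rw [hexpand, Finset.sum_eq_single_of_mem (k - 1) (Finset.mem_range.2 (by omega))]
  · rw [show ((k - 1 : ℕ) : ℤ) + 1 = k by omega, gridCoeff_mode, sub_self,
      if_pos (dvd_zero _), mode_zero_left, mul_one]
  · intro l hl hlk
    rw [Finset.mem_range] at hl
    rw [gridCoeff_mode, if_neg, mul_zero]
    intro hdvd
    have := Int.eq_zero_of_abs_lt_dvd hdvd (by rw [abs_lt]; omega)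
    omega

lemma gridCoeff_logSinSq_eq_neg_integral (hε : (mode 1 ε).im ≠ 0) (n : ℤ) :
    gridCoeff N ε logSinSq n = -∫ r in (0 : ℝ)..1,
      (gridCoeff N ε (geomMode r) n + (starRingEnd ℂ) (gridCoeff N ε (geomMode r) (-n))) := by
  have hcont (j : ℕ) : Continuous fun r => geomMode r ((j + ε) / N) :=
    continuous_div_one_sub_ofReal_mul (im_mode_one_add_div_ne_zero hε j)
  have hconj (j : ℕ) := continuous_conj.comp (hcont j)
  simp only [← gridCoeff_conj, Function.comp_def] at hconj ⊢
  simp only [gridCoeff, ← mul_add, ← Finset.sum_add_distrib, ← add_mul]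
  rw [intervalIntegral.integral_const_mul, intervalIntegral.integral_finsetSum fun j _ =>
    Continuous.intervalIntegrable (by fun_prop) _ _, ← mul_neg, ← Finset.sum_neg_distrib]
  congr! 2 with j
  rw [intervalIntegral.integral_mul_const,
    logSinSq_eq_neg_integral (im_mode_one_add_div_ne_zero hε j), neg_mul]

lemma continuous_gridCoeff_geomMode (hε : (mode 1 ε).im ≠ 0) (n : ℤ) :
    Continuous fun r => gridCoeff N ε (geomMode r) n := by
  have hcont (j : ℕ) : Continuous fun r => geomMode r ((j + ε) / N) :=
    continuous_div_one_sub_ofReal_mul (im_mode_one_add_div_ne_zero hε j)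
  simp only [gridCoeff]
  fun_prop

lemma exp_mul_gridCoeff_geomMode_add_conj (hε : (mode 1 ε).im ≠ 0) (r : ℝ) {k : ℕ} (hk : 0 < k)
    (hkN : k < N) {w : ℂ} (hw : ‖w‖ = 1) (hwε : mode 1 ε = w ^ 2) :
    w * (gridCoeff N ε (geomMode r) k + (starRingEnd ℂ) (gridCoeff N ε (geomMode r) (-k)))
      = r ^ (k - 1) * (w / (1 - (r ^ N : ℝ) * w ^ 2))
        + r ^ (N - k - 1) * (starRingEnd ℂ) (w / (1 - (r ^ N : ℝ) * w ^ 2)) := by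
  have hneg : gridCoeff N ε (geomMode r) (-k)
      = w ^ 2 * (r ^ (N - k - 1) / (1 - (r : ℂ) ^ N * w ^ 2)) := by
    rw [show (-k : ℤ) = ((N - k : ℕ) : ℤ) - N by omega, gridCoeff_sub_natCast,
      gridCoeff_geomMode hε r (by omega) (by omega), hwε]
  have hconj : w * (starRingEnd ℂ) w = 1 := by rw [mul_conj']; simp [hw]
  rw [gridCoeff_geomMode hε r hk hkN.le, hneg, hwε]
  simp only [map_mul, map_div₀, map_pow, map_sub, map_one, conj_ofReal, ofReal_pow]
  linear_combination (r : ℂ) ^ (N - k - 1) * (starRingEnd ℂ) w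
    / (1 - (r : ℂ) ^ N * (starRingEnd ℂ) w ^ 2) * hconj

lemma sq_re_mul_le_re_exp_mul_gridCoeff_geomMode (hε : (mode 1 ε).im ≠ 0) {k : ℕ} (hk : 0 < k)
    (hkN : k < N) {w : ℂ} (hw : ‖w‖ = 1) (hwε : mode 1 ε = w ^ 2) {r : ℝ}
    (hr : r ∈ Set.Icc (0 : ℝ) 1) :
    w.re ^ 2 / 4 * (r ^ (k - 1) - r ^ (N + k - 1)) ≤ w.re *
      (w * (gridCoeff N ε (geomMode r) k
        + (starRingEnd ℂ) (gridCoeff N ε (geomMode r) (-k)))).re := by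
  have hrN := pow_le_one₀ (n := N) hr.1 hr.2
  have hre := sq_re_mul_le_re_mul_re_div hw (pow_nonneg hr.1 N) hrN
  have : 0 ≤ w.re ^ 2 * (1 - r ^ N) / 4 :=
    div_nonneg (mul_nonneg (sq_nonneg _) (by linarith)) (by norm_num)
  rw [exp_mul_gridCoeff_geomMode_add_conj hε r hk hkN hw hwε, show N + k - 1 = k - 1 + N by omega,
    pow_add]
  set u := w / (1 - (r ^ N : ℝ) * w ^ 2)
  simp only [← ofReal_pow, add_re, re_ofReal_mul, conj_re]
  calc _ = r ^ (k - 1) * (w.re ^ 2 * (1 - r ^ N) / 4) := by ring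
    _ ≤ (r ^ (k - 1) + r ^ (N - k - 1)) * (w.re * u.re) := by
        gcongr
        · exact add_nonneg (pow_nonneg hr.1 _) (pow_nonneg hr.1 _)
        · exact le_add_of_nonneg_right (pow_nonneg hr.1 _)
    _ = _ := by ring

lemma sq_re_div_le_neg_re_exp_mul_gridCoeff (hε : (mode 1 ε).im ≠ 0) {k : ℕ} (hk : 0 < k)
    (hkN : k < N) {w : ℂ} (hw : ‖w‖ = 1) (hwε : mode 1 ε = w ^ 2) :
    w.re ^ 2 / (8 * k) ≤ -(w.re * (w * gridCoeff N ε logSinSq k).re) := by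
  set G : ℝ → ℂ := fun r => w * (gridCoeff N ε (geomMode r) k
    + (starRingEnd ℂ) (gridCoeff N ε (geomMode r) (-k)))
  have hcont : Continuous G := continuous_const.mul
    ((continuous_gridCoeff_geomMode hε _).add
      (continuous_conj.comp (continuous_gridCoeff_geomMode hε _)))
  have hre : ∫ r in (0 : ℝ)..1, w.re * (G r).re = -(w.re * (w * gridCoeff N ε logSinSq k).re) := by
    have h := reCLM.intervalIntegral_comp_comm (hcont.intervalIntegrable (μ := volume) 0 1)
    simp only [reCLM_apply] at h
    rw [intervalIntegral.integral_const_mul, h, intervalIntegral.integral_const_mul,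
      gridCoeff_logSinSq_eq_neg_integral hε, mul_neg, neg_re, mul_neg, neg_neg]
  have hint (n : ℕ) : IntervalIntegrable (fun r : ℝ => r ^ n) volume 0 1 :=
    (continuous_pow n).intervalIntegrable _ _
  have hk' : (0 : ℝ) < k := by exact_mod_cast hk
  have hkN' : (k : ℝ) < N := by exact_mod_cast hkN
  have hgap : (1 : ℝ) / (2 * k) ≤ 1 / k - 1 / (N + k) := by
    have : (1 : ℝ) / (N + k) ≤ 1 / (2 * k) := one_div_le_one_div_of_le (by linarith) (by linarith)
    have : (1 : ℝ) / k = 1 / (2 * k) + 1 / (2 * k) := by field_simp; norm_num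
    linarith
  calc w.re ^ 2 / (8 * k) = w.re ^ 2 / 4 * (1 / (2 * k)) := by ring
    _ ≤ w.re ^ 2 / 4 * (1 / k - 1 / (N + k)) := by gcongr
    _ = ∫ r in (0 : ℝ)..1, w.re ^ 2 / 4 * (r ^ (k - 1) - r ^ (N + k - 1)) := by
        rw [intervalIntegral.integral_const_mul, intervalIntegral.integral_sub (hint _) (hint _),
          integral_pow, integral_pow, Nat.cast_sub (by omega : 1 ≤ k),
          Nat.cast_sub (by omega : 1 ≤ N + k), Nat.sub_add_cancel hk,
          Nat.sub_add_cancel (by omega : 1 ≤ N + k)]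
        simp [hk.ne']
    _ ≤ ∫ r in (0 : ℝ)..1, w.re * (G r).re :=
        intervalIntegral.integral_mono_on zero_le_one
          (((hint _).sub (hint _)).const_mul _)
          ((continuous_const.mul (continuous_re.comp hcont)).intervalIntegrable _ _) fun r hr =>
          sq_re_mul_le_re_exp_mul_gridCoeff_geomMode hε hk hkN hw hwε hr
    _ = _ := hre

end LowerBound

lemma abs_cos_div_le_norm_gridCoeff_natCast {N : ℕ} {ε : ℝ} (hε : (mode 1 ε).im ≠ 0) {k : ℕ}
    (hk : 0 < k) (hkN : k < N) :
    |Real.cos (π * ε)| / (8 * k) ≤ ‖gridCoeff N ε logSinSq k‖ := by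
  have : NeZero N := ⟨by omega⟩
  set w := exp (π * ε * I)
  have hnorm : ‖w‖ = 1 := by
    have := norm_exp_ofReal_mul_I (π * ε)
    rwa [ofReal_mul] at this
  have hre : w.re = Real.cos (π * ε) := by
    have := exp_ofReal_mul_I_re (π * ε)
    rwa [ofReal_mul] at this
  have hsq := sq_re_div_le_neg_re_exp_mul_gridCoeff hε hk hkN hnorm (mode_one_eq_sq ε)
  have hle : |w.re| * (|w.re| / (8 * k)) ≤ |w.re| * ‖gridCoeff N ε logSinSq k‖ :=
    calc |w.re| * (|w.re| / (8 * k)) = w.re ^ 2 / (8 * k) := by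
          rw [← mul_div_assoc, abs_mul_abs_self, sq]
      _ ≤ |w.re| * |(w * gridCoeff N ε logSinSq k).re| := by
          rw [← abs_mul, ← abs_neg]
          exact hsq.trans (le_abs_self _)
      _ ≤ |w.re| * ‖gridCoeff N ε logSinSq k‖ := by
          have h := abs_re_le_norm (w * gridCoeff N ε logSinSq k)
          rw [norm_mul, hnorm, one_mul] at h
          gcongr
  rw [← hre]
  rcases (abs_nonneg w.re).eq_or_lt with h | h
  · simp [← h]
  · exact le_of_mul_le_mul_left hle h

lemma abs_cos_div_le_norm_gridCoeff {N : ℕ} {ε : ℝ} (hε : (mode 1 ε).im ≠ 0) {k : ℤ} (hk : k ≠ 0)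
    (hkN : |k| < N) :
    |Real.cos (π * ε)| / (8 * |(k : ℝ)|) ≤ ‖gridCoeff N ε logSinSq k‖ := by
  obtain ⟨n, rfl | rfl⟩ := k.eq_nat_or_neg
  · simpa using abs_cos_div_le_norm_gridCoeff_natCast hε (k := n) (by omega)
      (by simpa using hkN)
  · have hreal : (fun x => (starRingEnd ℂ) (logSinSq x)) = logSinSq := by
      funext x
      rw [logSinSq, conj_ofReal]
    rw [← norm_conj, ← gridCoeff_conj, hreal]
    simpa using abs_cos_div_le_norm_gridCoeff_natCast hε (k := n) (by omega) (by simpa using hkN)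

/-! ### Grid averages and cell averages -/

/-- The class of convolution kernels: 1-periodic and locally integrable. -/
structure PeriodicIntegrable {E : Type*} [NormedAddCommGroup E] (f : ℝ → E) : Prop where
  periodic : Function.Periodic f 1
  intervalIntegrable (a b : ℝ) : IntervalIntegrable f volume a b

/-- The `L¹` norm over one period. -/
noncomputable def l1Norm (f : ℝ → ℂ) : ℝ := ∫ x in (0 : ℝ)..1, ‖f x‖

/-- The average of `f` over the grid `(j + x) / N`, `0 ≤ j < N`. -/
noncomputable def gridAverage {E : Type*} [NormedAddCommGroup E] [NormedSpace ℝ E] (N : ℕ)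
    (f : ℝ → E) (x : ℝ) : E :=
  (N : ℝ)⁻¹ • ∑ j ∈ Finset.range N, f ((j + x) / N)

lemma gridCoeff_eq_gridAverage (N : ℕ) (ε : ℝ) (f : ℝ → ℂ) (n : ℤ) :
    gridCoeff N ε f n = gridAverage N (fun x => f x * mode (-n) x) ε := by
  simp [gridCoeff, gridAverage]

lemma periodicIntegrable_const {E : Type*} [NormedAddCommGroup E] (c : E) :
    PeriodicIntegrable fun _ => c :=
  ⟨fun _ => rfl, fun _ _ => _root_.intervalIntegrable_const⟩

lemma periodicIntegrable_logSinSq : PeriodicIntegrable logSinSq :=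
  ⟨periodic_logSinSq, intervalIntegrable_logSinSq⟩

lemma periodic_gridAverage {E : Type*} [NormedAddCommGroup E] [NormedSpace ℝ E] {f : ℝ → E}
    (hf : Function.Periodic f 1) (N : ℕ) [NeZero N] :
    Function.Periodic (gridAverage N f) 1 := fun x => by
  have hshift (j : ℕ) : f ((j + (x + 1)) / N) = f (((j + 1 : ℕ) + x) / N) := by
    push_cast; ring_nf
  have hwrap : f ((N + x) / N) = f (((0 : ℕ) + x) / N) := by
    rw [add_div, div_self (NeZero.ne _), add_comm, hf, Nat.cast_zero, zero_add]
  have h := (Finset.sum_range_succ (fun j : ℕ => f ((j + x) / N)) N).symm.trans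
    (Finset.sum_range_succ' (fun j : ℕ => f ((j + x) / N)) N)
  rw [hwrap, add_left_inj] at h
  simp only [gridAverage, hshift, h]

lemma periodic_gridCoeff {f : ℝ → ℂ} (hf : Function.Periodic f 1) (N : ℕ) [NeZero N] (n : ℤ) :
    Function.Periodic (fun ε => gridCoeff N ε f n) 1 := by
  simp only [gridCoeff_eq_gridAverage]
  exact periodic_gridAverage (fun x => by rw [hf, mode_add_one]) N

namespace PeriodicIntegrable

variable {E : Type*} [NormedAddCommGroup E] {f : ℝ → E}

lemma norm (hf : PeriodicIntegrable f) : PeriodicIntegrable fun x => ‖f x‖ :=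
  ⟨fun x => by rw [hf.periodic x], fun a b => (hf.intervalIntegrable a b).norm⟩

lemma mul_mode {f : ℝ → ℂ} (hf : PeriodicIntegrable f) (n : ℤ) :
    PeriodicIntegrable fun x => f x * mode n x :=
  ⟨fun x => by rw [hf.periodic x, mode_add_one],
    fun a b => (hf.intervalIntegrable a b).mul_continuousOn (continuous_mode n).continuousOn⟩

lemma intervalIntegrable_comp_add_div (hf : PeriodicIntegrable f) (N : ℕ) [NeZero N]
    (c a b : ℝ) : IntervalIntegrable (fun x => f ((c + x) / N)) volume a b := by
  have hN : (N : ℝ) ≠ 0 := NeZero.ne _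
  have h := ((hf.intervalIntegrable ((c + a) / N) ((c + b) / N)).comp_mul_right
    (c := (N : ℝ)⁻¹)).comp_add_left c
  simpa [div_eq_mul_inv, hN] using h

variable [NormedSpace ℝ E]

lemma gridAverage (hf : PeriodicIntegrable f) (N : ℕ) [NeZero N] :
    PeriodicIntegrable (gridAverage N f) := by
  refine ⟨periodic_gridAverage hf.periodic N, fun a b => ?_⟩
  have h := (IntervalIntegrable.sum (Finset.range N) fun j _ =>
    hf.intervalIntegrable_comp_add_div N j a b).smul (N : ℝ)⁻¹
  convert h using 1
  ext x
  simp [_root_.gridAverage]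

lemma integral_gridAverage (hf : PeriodicIntegrable f) (N : ℕ) [NeZero N] :
    ∫ x in (0 : ℝ)..1, _root_.gridAverage N f x = ∫ x in (0 : ℝ)..1, f x := by
  have hN : (N : ℝ) ≠ 0 := NeZero.ne _
  have hcell (j : ℕ) : (N : ℝ)⁻¹ • ∫ x in (0 : ℝ)..1, f ((j + x) / N)
      = ∫ x in (j / N : ℝ)..((j + 1 : ℕ) / N : ℝ), f x := by
    simp only [add_div]
    rw [intervalIntegral.integral_comp_add_div f hN, inv_smul_smul₀ hN]
    push_cast
    ring_nf
  simp only [_root_.gridAverage]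
  rw [intervalIntegral.integral_smul, intervalIntegral.integral_finsetSum
      (f := fun (j : ℕ) x => f ((j + x) / N)) fun j _ =>
      hf.intervalIntegrable_comp_add_div N j 0 1,
    Finset.smul_sum, Finset.sum_congr rfl fun j _ => hcell j,
    intervalIntegral.sum_integral_adjacent_intervals fun j _ => hf.intervalIntegrable _ _,
    div_self hN]
  simp

end PeriodicIntegrable

/-- The unit square `[0, 1]²`, over which the offsets of the two points of a pair of cells run. -/
abbrev unitSquare : Set (ℝ × ℝ) := Set.Icc 0 1 ×ˢ Set.Icc 0 1

lemma isCompact_unitSquare : IsCompact unitSquare := isCompact_Icc.prod isCompact_Icc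

lemma integrableOn_unitSquare_comp_sub {E : Type*} [NormedAddCommGroup E] {f : ℝ → E}
    (hf : ∀ a b, IntervalIntegrable f volume a b) (c : ℝ) :
    IntegrableOn (fun p : ℝ × ℝ => f (c + p.1 - p.2)) unitSquare := by
  have hshift : IntervalIntegrable (fun x => f (c + x)) volume (-1) 1 := by
    simpa using (hf (c - 1) (c + 1)).comp_add_left c
  have hF : Integrable ((Set.Icc (-1 : ℝ) 1).indicator fun x => f (c + x)) :=
    ((intervalIntegrable_iff_integrableOn_Icc_of_le (by norm_num)).1 hshift).integrable_indicator
      measurableSet_Icc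
  have hprod := (measurePreserving_sub_prod volume
    (volume.restrict (Set.Icc (0 : ℝ) 1))).integrable_comp_of_integrable (hF.comp_fst _)
  have hon := (hprod.mono_measure
    (Measure.prod_mono (Measure.restrict_le_self (s := Set.Icc (0 : ℝ) 1)) le_rfl))
  rw [Measure.prod_restrict, ← Measure.volume_eq_prod] at hon
  refine IntegrableOn.congr_fun hon (fun p hp => ?_) isCompact_unitSquare.measurableSet
  have hmem : p.1 - p.2 ∈ Set.Icc (-1 : ℝ) 1 := by
    constructor <;> linarith [hp.1.1, hp.1.2, hp.2.1, hp.2.2]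
  simp [Set.indicator_of_mem hmem, add_sub_assoc]

lemma setIntegral_unitSquare_eq_integral {E : Type*} [NormedAddCommGroup E] [NormedSpace ℝ E]
    {F : ℝ × ℝ → E} (hF : IntegrableOn F unitSquare) :
    ∫ p in unitSquare, F p = ∫ x in (0 : ℝ)..1, ∫ y in (0 : ℝ)..1, F (x, y) := by
  rw [Measure.volume_eq_prod] at hF ⊢
  simp only [setIntegral_prod F hF, integral_Icc_eq_integral_Ioc,
    intervalIntegral.integral_of_le zero_le_one]

namespace PeriodicIntegrable

variable {E : Type*} [NormedAddCommGroup E] {f : ℝ → E}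

lemma integrableOn_unitSquare (hf : PeriodicIntegrable f) (c : ℝ) :
    IntegrableOn (fun p : ℝ × ℝ => f (c + p.1 - p.2)) unitSquare :=
  integrableOn_unitSquare_comp_sub hf.intervalIntegrable c

lemma setIntegral_unitSquare [NormedSpace ℝ E] [CompleteSpace E]
    (hf : PeriodicIntegrable f) (c : ℝ) :
    ∫ p in unitSquare, f (c + p.1 - p.2) = ∫ x in (0 : ℝ)..1, f x := by
  have hinner (x : ℝ) : ∫ y in (0 : ℝ)..1, f (c + x - y) = ∫ x in (0 : ℝ)..1, f x := by
    rw [intervalIntegral.integral_comp_sub_left]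
    simpa using hf.periodic.intervalIntegral_add_eq (c + x - 1) 0
  rw [setIntegral_unitSquare_eq_integral (hf.integrableOn_unitSquare c)]
  simp [hinner]

end PeriodicIntegrable

lemma norm_gridCoeff_le_gridAverage (N : ℕ) (ε : ℝ) (f : ℝ → ℂ) (n : ℤ) :
    ‖gridCoeff N ε f n‖ ≤ gridAverage N (fun x => ‖f x‖) ε := by
  rw [gridCoeff_eq_gridAverage, gridAverage, gridAverage, norm_smul, norm_inv,
    RCLike.norm_natCast, smul_eq_mul]
  gcongr
  simpa only [norm_mul, norm_mode, mul_one] using norm_sum_le (Finset.range N)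
    fun j : ℕ => f ((j + ε) / N) * mode (-n) ((j + ε) / N)

/-- The contribution of the pair of points at offset `p` in a pair of cells to a Fourier
coefficient along the grid: the unimodular factors come from moving both modes to the
corners of the cells. -/
noncomputable def offsetCoeff (N : ℕ) (ε : ℝ) (f : ℝ → ℂ) (k m n : ℤ) (p : ℝ × ℝ) : ℂ :=
  mode k (p.1 / N) * mode (-m) (p.2 / N) * gridCoeff N (ε + p.1 - p.2) f n

/-- The average of `offsetCoeff` over a pair of cells. -/
noncomputable def cellCoeff (N : ℕ) (ε : ℝ) (f : ℝ → ℂ) (k m n : ℤ) : ℂ :=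
  ∫ p in unitSquare, offsetCoeff N ε f k m n p

lemma norm_offsetCoeff_le (N : ℕ) (ε : ℝ) (f : ℝ → ℂ) (k m n : ℤ) (p : ℝ × ℝ) :
    ‖offsetCoeff N ε f k m n p‖ ≤ gridAverage N (fun x => ‖f x‖) (ε + p.1 - p.2) := by
  simpa [offsetCoeff, norm_mode] using norm_gridCoeff_le_gridAverage N (ε + p.1 - p.2) f n

lemma norm_mode_mul_mode_sub_one_le (N : ℕ) (k m : ℤ) {p : ℝ × ℝ} (hp : p ∈ unitSquare) :
    ‖mode k (p.1 / N) * mode (-m) (p.2 / N) - 1‖ ≤ 2 * π * (|(k : ℝ)| + |(m : ℝ)|) / N := by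
  have hoffset {x : ℝ} (hx : x ∈ Set.Icc (0 : ℝ) 1) (n : ℤ) :
      ‖mode n (x / N) - 1‖ ≤ 2 * π * |(n : ℝ)| / N := by
    have hx' : |x / N| ≤ 1 / N := by
      rw [abs_of_nonneg (div_nonneg hx.1 N.cast_nonneg)]
      exact div_le_div_of_nonneg_right hx.2 N.cast_nonneg
    calc ‖mode n (x / N) - 1‖ ≤ 2 * π * |(n : ℝ)| * |x / N| := norm_mode_sub_one_le n _
      _ ≤ 2 * π * |(n : ℝ)| * (1 / N) := by gcongr
      _ = _ := by ring
  calc ‖mode k (p.1 / N) * mode (-m) (p.2 / N) - 1‖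
      = ‖mode k (p.1 / N) * (mode (-m) (p.2 / N) - 1) + (mode k (p.1 / N) - 1)‖ := by ring_nf
    _ ≤ ‖mode (-m) (p.2 / N) - 1‖ + ‖mode k (p.1 / N) - 1‖ := by
      simpa [norm_mode] using norm_add_le
        (mode k (p.1 / N) * (mode (-m) (p.2 / N) - 1)) (mode k (p.1 / N) - 1)
    _ ≤ 2 * π * |((-m : ℤ) : ℝ)| / N + 2 * π * |(k : ℝ)| / N :=
      add_le_add (hoffset hp.2 _) (hoffset hp.1 _)
    _ = _ := by push_cast; rw [abs_neg]; ring

namespace PeriodicIntegrable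

variable {f : ℝ → ℂ}

lemma gridCoeff (hf : PeriodicIntegrable f) (N : ℕ) [NeZero N] (n : ℤ) :
    PeriodicIntegrable fun ε => gridCoeff N ε f n := by
  simp only [gridCoeff_eq_gridAverage]
  exact (hf.mul_mode (-n)).gridAverage N

lemma setIntegral_gridCoeff (hf : PeriodicIntegrable f) (N : ℕ) [NeZero N] (ε : ℝ) (n : ℤ) :
    ∫ p in unitSquare, _root_.gridCoeff N (ε + p.1 - p.2) f n = fc f n := by
  rw [(hf.gridCoeff N n).setIntegral_unitSquare ε, fc_eq_integral_mode]
  simp only [gridCoeff_eq_gridAverage]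
  exact (hf.mul_mode (-n)).integral_gridAverage N

lemma setIntegral_gridAverage_norm (hf : PeriodicIntegrable f) (N : ℕ) [NeZero N] (ε : ℝ) :
    ∫ p in unitSquare, _root_.gridAverage N (fun x => ‖f x‖) (ε + p.1 - p.2) = l1Norm f := by
  rw [(hf.norm.gridAverage N).setIntegral_unitSquare ε, hf.norm.integral_gridAverage N, l1Norm]

lemma integrableOn_offsetCoeff (hf : PeriodicIntegrable f) (N : ℕ) [NeZero N] (ε : ℝ)
    (k m n : ℤ) : IntegrableOn (offsetCoeff N ε f k m n) unitSquare := by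
  have hmodes : Continuous fun p : ℝ × ℝ => mode k (p.1 / N) * mode (-m) (p.2 / N) := by
    fun_prop
  exact ((hf.gridCoeff N n).integrableOn_unitSquare ε).continuousOn_mul hmodes.continuousOn
    isCompact_unitSquare

lemma norm_cellCoeff_le (hf : PeriodicIntegrable f) (N : ℕ) [NeZero N] (ε : ℝ) (k m n : ℤ) :
    ‖cellCoeff N ε f k m n‖ ≤ l1Norm f := by
  rw [← hf.setIntegral_gridAverage_norm N ε]
  exact norm_integral_le_of_norm_le ((hf.norm.gridAverage N).integrableOn_unitSquare ε)
    (ae_of_all _ fun p => norm_offsetCoeff_le N ε f k m n p)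

lemma norm_cellCoeff_sub_fc_le (hf : PeriodicIntegrable f) (N : ℕ) [NeZero N] (ε : ℝ)
    (k m n : ℤ) :
    ‖cellCoeff N ε f k m n - fc f n‖ ≤ 2 * π * (|(k : ℝ)| + |(m : ℝ)|) / N * l1Norm f := by
  have hbound : IntegrableOn (fun p : ℝ × ℝ => 2 * π * (|(k : ℝ)| + |(m : ℝ)|) / N *
      _root_.gridAverage N (fun x => ‖f x‖) (ε + p.1 - p.2)) unitSquare :=
    ((hf.norm.gridAverage N).integrableOn_unitSquare ε).const_mul _
  rw [← hf.setIntegral_gridCoeff N ε n, cellCoeff, ← integral_sub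
    (hf.integrableOn_offsetCoeff N ε k m n) ((hf.gridCoeff N n).integrableOn_unitSquare ε),
    ← hf.setIntegral_gridAverage_norm N ε, ← integral_const_mul]
  refine norm_integral_le_of_norm_le hbound
    ((ae_restrict_iff' isCompact_unitSquare.measurableSet).2 (ae_of_all _ fun p hp => ?_))
  rw [offsetCoeff, ← sub_one_mul, norm_mul]
  gcongr
  · exact norm_mode_mul_mode_sub_one_le N k m hp
  · exact norm_gridCoeff_le_gridAverage N _ f n

end PeriodicIntegrable

lemma tendsto_cellCoeff {f : ℝ → ℂ} (hf : PeriodicIntegrable f) (ε : ℝ) (k m n : ℤ) :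
    Tendsto (fun N => cellCoeff N ε f k m n) atTop (𝓝 (fc f n)) := by
  rw [tendsto_iff_norm_sub_tendsto_zero]
  have hbound : Tendsto (fun N : ℕ => 2 * π * (|(k : ℝ)| + |(m : ℝ)|) / N * l1Norm f)
      atTop (𝓝 0) := by
    simpa using (tendsto_const_div_atTop_nhds_zero_nat _).mul_const (l1Norm f)
  refine squeeze_zero' (.of_forall fun N => norm_nonneg _) ?_ hbound
  filter_upwards [eventually_ne_atTop 0] with N hN
  have : NeZero N := ⟨hN⟩
  exact hf.norm_cellCoeff_sub_fc_le N ε k m n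

/-! ### Fourier coefficients of the matrix columns -/

/-- The kernel `A(s,t) f(s-t)`. -/
def convKer (A : ℝ → ℝ → ℂ) (f : ℝ → ℂ) (s t : ℝ) : ℂ := A s t * f (s - t)

/-- The Fourier coefficients of a vector living on the grid `s_{i+ε}`. -/
noncomputable def vecCoeff (N : ℕ) (ε : ℝ) (u : Fin N → ℂ) (k : ℤ) : ℂ :=
  (N : ℂ)⁻¹ * ∑ i : Fin N, u i * mode (-k) (sg (1 / N) ε (i : ℕ))

lemma sg_add (h ε a : ℝ) (i : ℤ) : sg h (ε + a) i = sg h ε i + a * h := by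
  simp only [sg]; ring

lemma sg_add_one (h ε : ℝ) (i : ℤ) : sg h ε (i + 1) = sg h (ε + 1) i := by
  simp only [sg]; push_cast; ring

lemma hasSum_gridCoeff_convKer {A : ℝ → ℝ → ℂ} (hA : SPK A) (f : ℝ → ℂ) (N : ℕ) (ε y : ℝ)
    (k : ℤ) :
    HasSum (fun x : ℤ × ℤ => fc₂ A x.1 x.2 * (mode (x.1 + x.2) y * gridCoeff N ε f (k - x.1)))
      (gridCoeff N ε (fun x => convKer A f (x + y) y) k) := by
  have hsum := (hasSum_sum (s := Finset.range N) fun j _ =>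
    (hA.hasSum_fc₂ ((j + ε) / N + y) y).mul_right
      (f ((j + ε) / N) * mode (-k) ((j + ε) / N))).mul_left (N : ℂ)⁻¹
  have hvalue : gridCoeff N ε (fun x => convKer A f (x + y) y) k
      = (N : ℂ)⁻¹ * ∑ j ∈ Finset.range N,
        A ((j + ε) / N + y) y * (f ((j + ε) / N) * mode (-k) ((j + ε) / N)) := by
    simp only [gridCoeff, convKer, add_sub_cancel_right, mul_assoc]
  rw [hvalue]
  refine hsum.congr_fun fun x => ?_
  simp only [gridCoeff, Finset.mul_sum]
  refine Finset.sum_congr rfl fun j _ => ?_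
  rw [neg_sub, sub_eq_add_neg x.1 k, mode_add_left x.1 (-k), mode_add_left x.1 x.2,
    mode_add_right]
  ring

lemma gridCoeff_comp_add (N : ℕ) [NeZero N] (δ y : ℝ) (V : ℝ → ℂ) (k : ℤ) :
    gridCoeff N δ (fun x => V (x + y)) k = mode k y * gridCoeff N (δ + N * y) V k := by
  have hN : (N : ℝ) ≠ 0 := NeZero.ne _
  have hpt (j : ℕ) : (j + (δ + N * y)) / N = (j + δ) / N + y := by field_simp; ring
  simp only [gridCoeff, hpt, Finset.mul_sum, mode_add_right, mode_neg_left k y]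
  refine Finset.sum_congr rfl fun j _ => ?_
  field_simp [mode_ne_zero k y]

lemma vecCoeff_sample (N : ℕ) (ε a : ℝ) (V : ℝ → ℂ) (k : ℤ) :
    vecCoeff N ε (fun i => V (sg (1 / N) (ε + a) (i : ℕ))) k
      = mode k (a / N) * gridCoeff N (ε + a - 1 / 2) V k := by
  simp only [vecCoeff, gridCoeff, Finset.sum_range, Finset.mul_sum]
  refine Finset.sum_congr rfl fun i _ => ?_
  have hpt : (((i : ℕ) : ℝ) + (ε + a - 1 / 2)) / N = sg (1 / N) ε (i : ℕ) + a / N := by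
    simp only [sg]; push_cast; ring
  rw [hpt, mode_add_right, mode_neg_left k (a / N), sg_add, mul_one_div]
  field_simp [mode_ne_zero k (a / N)]

lemma vecCoeff_convKer_column {A : ℝ → ℝ → ℂ} (hA : SPK A) {f : ℝ → ℂ}
    (hf : Function.Periodic f 1) (N : ℕ) [NeZero N] (ε : ℝ) (j k : ℤ) (p : ℝ × ℝ) :
    vecCoeff N ε (fun i => convKer A f (sg (1 / N) (ε + p.1) (i : ℕ)) (sg (1 / N) p.2 j)) k
      = mode k (p.1 / N) * (mode (-k) (sg (1 / N) p.2 j) *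
        gridCoeff N (ε + p.1 - p.2)
          (fun x => convKer A f (x + sg (1 / N) p.2 j) (sg (1 / N) p.2 j)) k) := by
  set y := sg (1 / N) p.2 j with hy
  have hV : Function.Periodic (fun s => convKer A f s y) 1 := fun s => by
    simp only [convKer, hA.2.1, add_sub_right_comm s 1 y, hf (s - y)]
  have hNy : (N : ℝ) * y = j - 1 / 2 + p.2 := by
    rw [hy, sg, mul_one_div, mul_div_cancel₀ _ (NeZero.ne _)]
  have hshift : ε + p.1 - p.2 + N * y = ε + p.1 - 1 / 2 + j * (1 : ℝ) := by rw [hNy]; ring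
  have hper := (periodic_gridCoeff hV N k).int_mul j (ε + p.1 - 1 / 2)
  beta_reduce at hper
  rw [vecCoeff_sample N ε p.1 (fun s => convKer A f s y),
    gridCoeff_comp_add N _ y (fun s => convKer A f s y), hshift, hper, mode_neg_left,
    inv_mul_cancel_left₀ (mode_ne_zero k y)]

lemma hasSum_vecCoeff_convKer {A : ℝ → ℝ → ℂ} (hA : SPK A) {f : ℝ → ℂ}
    (hf : Function.Periodic f 1) (N : ℕ) [NeZero N] (ε : ℝ) (j k : ℤ) (p : ℝ × ℝ) :
    HasSum (fun x : ℤ × ℤ => fc₂ A x.1 x.2 *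
        offsetCoeff N ε f k (k - x.1 - x.2) (k - x.1) p *
        mode (-(k - x.1 - x.2)) (sg (1 / N) 0 j))
      (vecCoeff N ε
        (fun i => convKer A f (sg (1 / N) (ε + p.1) (i : ℕ)) (sg (1 / N) p.2 j)) k) := by
  rw [vecCoeff_convKer_column hA hf]
  refine (((hasSum_gridCoeff_convKer hA f N (ε + p.1 - p.2) (sg (1 / N) p.2 j) k).mul_left
    _).mul_left _).congr_fun fun x => ?_
  have hy : sg (1 / N) p.2 j = sg (1 / N) 0 j + p.2 / N := by
    rw [← zero_add p.2, sg_add, zero_add, mul_one_div]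
  have hmode : mode (-k) (sg (1 / N) p.2 j) * mode (x.1 + x.2) (sg (1 / N) p.2 j)
      = mode (-(k - x.1 - x.2)) (p.2 / N) * mode (-(k - x.1 - x.2)) (sg (1 / N) 0 j) := by
    rw [← mode_add_left, ← mode_add_right, add_comm (p.2 / (N : ℝ)), ← hy]
    ring_nf
  rw [offsetCoeff]
  linear_combination (-(mode k (p.1 / N) * fc₂ A x.1 x.2 *
    gridCoeff N (ε + p.1 - p.2) f (k - x.1))) * hmode

/-- The second difference over the corners of the unit square. -/
def cornerDiff (F : ℝ × ℝ → ℂ) : ℂ := F (1, 1) - F (0, 1) - F (1, 0) + F (0, 0)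

/-- The Fourier multiplier of the forward difference quotient on the grid of width `1 / N`. -/
noncomputable def diffSymbol (N : ℕ) (k : ℤ) : ℂ := N * (mode k (1 / N) - 1)

lemma cornerDiff_offsetCoeff {f : ℝ → ℂ} (hf : Function.Periodic f 1) (N : ℕ) [NeZero N]
    (ε : ℝ) (k m n : ℤ) :
    N ^ 2 * cornerDiff (offsetCoeff N ε f k m n)
      = diffSymbol N k * diffSymbol N (-m) * gridCoeff N ε f n := by
  have hup := periodic_gridCoeff hf N n ε
  have hdown := (periodic_gridCoeff hf N n).sub_eq ε
  simp only [cornerDiff, offsetCoeff, diffSymbol, zero_div, mode_zero_right, add_zero, sub_zero,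
    add_sub_cancel_right] at *
  rw [hup, hdown]
  ring

lemma integral_sg (N : ℕ) [NeZero N] (ε : ℝ) (i : ℤ) (g : ℝ → ℂ) :
    ∫ s in (sg (1 / N) ε i)..(sg (1 / N) ε (i + 1)), g s
      = (N : ℂ)⁻¹ * ∫ x in (0 : ℝ)..1, g (sg (1 / N) (ε + x) i) := by
  have hN : (N : ℝ) ≠ 0 := NeZero.ne _
  simp only [sg_add_one, sg_add, mul_one_div, intervalIntegral.integral_comp_add_div g hN]
  simp [NeZero.ne N]

lemma integral_cell (N : ℕ) [NeZero N] (ε : ℝ) (i j : ℤ) {V : ℝ → ℝ → ℂ}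
    (hV : IntegrableOn (fun p : ℝ × ℝ => V (sg (1 / N) (ε + p.1) i) (sg (1 / N) p.2 j))
      unitSquare) :
    ∫ s in (sg (1 / N) ε i)..(sg (1 / N) ε (i + 1)),
        ∫ t in (sg (1 / N) 0 j)..(sg (1 / N) 0 (j + 1)), V s t
      = (N ^ 2 : ℂ)⁻¹ *
        ∫ p in unitSquare, V (sg (1 / N) (ε + p.1) i) (sg (1 / N) p.2 j) := by
  simp only [integral_sg, intervalIntegral.integral_const_mul, zero_add,
    setIntegral_unitSquare_eq_integral hV]
  ring

lemma integrableOn_convKer_cell {A : ℝ → ℝ → ℂ} (hA : SPK A) {f : ℝ → ℂ}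
    (hf : PeriodicIntegrable f) (N : ℕ) [NeZero N] (ε : ℝ) (i j : ℤ) :
    IntegrableOn (fun p : ℝ × ℝ => convKer A f (sg (1 / N) (ε + p.1) i) (sg (1 / N) p.2 j))
      unitSquare := by
  have hA' : Continuous fun p : ℝ × ℝ => A (sg (1 / N) (ε + p.1) i) (sg (1 / N) p.2 j) := by
    have h := hA.continuous_uncurry
    unfold sg
    fun_prop
  have hf' := integrableOn_unitSquare_comp_sub
    (hf.intervalIntegrable_comp_add_div N (i - j + ε)) 0
  refine (hf'.continuousOn_mul hA'.continuousOn isCompact_unitSquare).congr_fun (fun p _ => ?_)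
    isCompact_unitSquare.measurableSet
  simp only [convKer, sg]
  ring_nf

lemma hasSum_setIntegral_vecCoeff_convKer {A : ℝ → ℝ → ℂ} (hA : SPK A) {f : ℝ → ℂ}
    (hf : PeriodicIntegrable f) (N : ℕ) [NeZero N] (ε : ℝ) (j k : ℤ) :
    HasSum (fun x : ℤ × ℤ => ∫ p in unitSquare, fc₂ A x.1 x.2 *
        offsetCoeff N ε f k (k - x.1 - x.2) (k - x.1) p *
        mode (-(k - x.1 - x.2)) (sg (1 / N) 0 j))
      (∫ p in unitSquare, vecCoeff N ε
        (fun i => convKer A f (sg (1 / N) (ε + p.1) (i : ℕ)) (sg (1 / N) p.2 j)) k) := by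
  have havg := (hf.norm.gridAverage N).integrableOn_unitSquare ε
  refine hasSum_integral_of_dominated_convergence
    (fun x p => ‖fc₂ A x.1 x.2‖ * gridAverage N (fun x => ‖f x‖) (ε + p.1 - p.2))
    (fun x => (((hf.integrableOn_offsetCoeff N ε k _ _).const_mul _).mul_const
      _).aestronglyMeasurable)
    (fun x => ae_of_all _ fun p => ?_)
    (ae_of_all _ fun p => hA.summable_norm_fc₂.mul_right _) ?_
    (ae_of_all _ fun p => hasSum_vecCoeff_convKer hA hf.periodic N ε j k p)
  · rw [norm_mul, norm_mul, norm_mode, mul_one]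
    gcongr
    exact norm_offsetCoeff_le N ε f k _ _ p
  · simp only [tsum_mul_right]
    exact havg.const_mul _

lemma hasSum_vecCoeff_cell {A : ℝ → ℝ → ℂ} (hA : SPK A) {f : ℝ → ℂ}
    (hf : PeriodicIntegrable f) (N : ℕ) [NeZero N] (ε : ℝ) (j k : ℤ) :
    HasSum (fun x : ℤ × ℤ => fc₂ A x.1 x.2 * cellCoeff N ε f k (k - x.1 - x.2) (k - x.1) *
        mode (-(k - x.1 - x.2)) (sg (1 / N) 0 j))
      (vecCoeff N ε (fun i => ∫ p in unitSquare,
        convKer A f (sg (1 / N) (ε + p.1) (i : ℕ)) (sg (1 / N) p.2 j)) k) := by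
  convert hasSum_setIntegral_vecCoeff_convKer hA hf N ε j k using 1
  · simp only [integral_mul_const, integral_const_mul, cellCoeff]
  · simp only [vecCoeff]
    rw [integral_const_mul, integral_finsetSum Finset.univ fun (i : Fin N) _ =>
      (integrableOn_convKer_cell hA hf N ε (i : ℕ) j).mul_const (mode (-k) (sg (1 / N) ε (i : ℕ)))]
    simp only [integral_mul_const]

/-! ### Restriction of a smooth kernel to the diagonal -/

lemma fc_eq_of_hasSum {c : ℤ → ℂ} (hc : Summable fun n => ‖c n‖) {f : ℝ → ℂ}
    (hf : ∀ x, HasSum (fun n => c n * mode n x) (f x)) (m : ℤ) : fc f m = c m := by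
  have hsum := intervalIntegral.hasSum_integral_of_dominated_convergence (a := 0) (b := 1)
    (μ := volume) (F := fun n x => c n * mode n x * mode (-m) x) (f := fun x => f x * mode (-m) x)
    (fun n _ => ‖c n‖) (fun n => Continuous.aestronglyMeasurable (by fun_prop))
    (fun n => ae_of_all _ fun x _ => by simp [norm_mode]) (ae_of_all _ fun x _ => hc)
    _root_.intervalIntegrable_const (ae_of_all _ fun x _ => (hf x).mul_right _)
  have hterm (n : ℤ) : ∫ x in (0 : ℝ)..1, c n * mode n x * mode (-m) x
      = if n = m then c m else 0 := by
    simp only [mul_assoc, ← mode_add_left, intervalIntegral.integral_const_mul, integral_mode,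
      add_neg_eq_zero]
    split_ifs with h <;> simp [h]
  rw [fc_eq_integral_mode]
  simp only [hterm] at hsum
  exact hsum.unique (hasSum_ite_eq m (c m))

/-- The reindexing `(l, q) ↦ (l - q, q)` of pairs of frequencies by their sum. -/
@[simps]
def shear : ℤ × ℤ ≃ ℤ × ℤ where
  toFun x := (x.1 - x.2, x.2)
  invFun x := (x.1 + x.2, x.2)
  left_inv x := by simp
  right_inv x := by simp

/-- The coefficient of `mode l` in the restriction to the diagonal of the function with double
Fourier coefficients `c`. -/
noncomputable def diagCoeff (c : ℤ × ℤ → ℂ) (l : ℤ) : ℂ := ∑' q, c (l - q, q)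

section

variable {c : ℤ × ℤ → ℂ}

lemma summable_mul_comp_add (hc : Summable c) {G : ℤ → ℂ} {C : ℝ} (hG : ∀ l, ‖G l‖ ≤ C) :
    Summable fun x : ℤ × ℤ => c x * G (x.1 + x.2) :=
  .of_norm_bounded (hc.norm.mul_right C) fun x => by rw [norm_mul]; gcongr; exact hG _

lemma hasSum_diagCoeff_mul (hc : Summable c) {G : ℤ → ℂ} {C : ℝ} (hG : ∀ l, ‖G l‖ ≤ C) :
    HasSum (fun l => diagCoeff c l * G l) (∑' x : ℤ × ℤ, c x * G (x.1 + x.2)) := by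
  have hcol : Summable (c ∘ shear) := hc.comp_injective shear.injective
  have hsum := shear.hasSum_iff.2 (summable_mul_comp_add hc hG).hasSum
  simp only [Function.comp_def, shear_apply, sub_add_cancel] at hsum
  exact hsum.prod_fiberwise fun l => (hcol.prod_factor l).hasSum.mul_right (G l)

lemma diagCoeff_of_hasSum (hc : Summable c) {α : ℂ}
    (hα : ∀ s, HasSum (fun x : ℤ × ℤ => c x * mode (x.1 + x.2) s) α) (l : ℤ) :
    diagCoeff c l = if l = 0 then α else 0 := by
  have hdiag (s : ℝ) : HasSum (fun l => diagCoeff c l * mode l s) α :=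
    (hα s).tsum_eq ▸ hasSum_diagCoeff_mul hc (C := 1) fun l => (norm_mode l s).le
  have hsummable : Summable fun l => ‖diagCoeff c l‖ := by
    simpa using (hasSum_diagCoeff_mul hc (G := fun _ => 1) (C := 1) (by simp)).summable.norm
  rw [← fc_eq_of_hasSum hsummable hdiag]
  simpa only [mul_one, fc_one, mul_ite, mul_zero] using fc_const_mul α (fun _ => 1) l

lemma hasSum_mul_comp_add (hc : Summable c) {α : ℂ}
    (hα : ∀ s, HasSum (fun x : ℤ × ℤ => c x * mode (x.1 + x.2) s) α) {G : ℤ → ℂ} {C : ℝ}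
    (hG : ∀ l, ‖G l‖ ≤ C) : HasSum (fun x : ℤ × ℤ => c x * G (x.1 + x.2)) (α * G 0) := by
  have h := hasSum_diagCoeff_mul hc hG
  simp only [diagCoeff_of_hasSum hc hα, ite_mul, zero_mul] at h
  have h₀ : HasSum (fun l => if l = 0 then α * G l else 0) (α * G 0) := by
    convert hasSum_ite_eq (0 : ℤ) (α * G 0) using 3 with l hl
    rw [hl]
  exact h.unique h₀ ▸ (summable_mul_comp_add hc hG).hasSum

end

lemma SPK.hasSum_fc₂_mul_of_diag {A : ℝ → ℝ → ℂ} (hA : SPK A) {α : ℂ} (hdiag : ∀ s, A s s = α)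
    {G : ℤ → ℂ} {C : ℝ} (hG : ∀ l, ‖G l‖ ≤ C) :
    HasSum (fun x : ℤ × ℤ => fc₂ A x.1 x.2 * G (x.1 + x.2)) (α * G 0) :=
  hasSum_mul_comp_add (c := fun x => fc₂ A x.1 x.2) hA.summable_norm_fc₂.of_norm
    (fun s => by simpa only [mode_add_left, hdiag] using hA.hasSum_fc₂ s s) hG

/-! ### The discrete equation -/

section

variable (N : ℕ) (ε : ℝ)

lemma vecCoeff_add (u v : Fin N → ℂ) (k : ℤ) :
    vecCoeff N ε (fun i => u i + v i) k = vecCoeff N ε u k + vecCoeff N ε v k := by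
  simp only [vecCoeff, add_mul, Finset.sum_add_distrib, mul_add]

lemma vecCoeff_const_mul (c : ℂ) (u : Fin N → ℂ) (k : ℤ) :
    vecCoeff N ε (fun i => c * u i) k = c * vecCoeff N ε u k := by
  simp only [vecCoeff, mul_assoc, ← Finset.mul_sum, mul_left_comm]

lemma vecCoeff_sum_mul {ι : Type*} [Fintype ι] (M : Fin N → ι → ℂ) (φ : ι → ℂ) (k : ℤ) :
    vecCoeff N ε (fun i => ∑ j, M i j * φ j) k
      = ∑ j, vecCoeff N ε (fun i => M i j) k * φ j := by
  simp only [vecCoeff, Finset.sum_mul, Finset.mul_sum]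
  rw [Finset.sum_comm]
  exact Finset.sum_congr rfl fun j _ => Finset.sum_congr rfl fun i _ => by ring

lemma sum_mode_neg_mul_mode_sg [NeZero N] (s : ℤ) (j l : Fin N) :
    ∑ m ∈ Finset.range N, mode (-(s + m)) (sg (1 / N) ε (j : ℕ)) *
        mode (s + m) (sg (1 / N) ε (l : ℕ))
      = if l = j then (N : ℂ) else 0 := by
  have hterm (m : ℕ) : mode (-(s + m)) (sg (1 / N) ε (j : ℕ)) *
      mode (s + m) (sg (1 / N) ε (l : ℕ)) = mode ((l : ℤ) - (j : ℤ)) ((m + (s : ℝ)) / N) := by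
    have hsub : -sg (1 / N) ε (j : ℕ) + sg (1 / N) ε (l : ℕ)
        = (((l : ℤ) - (j : ℤ) : ℤ) : ℝ) * (1 / N) := by
      simp only [sg]; push_cast; ring
    rw [← mode_neg_right, ← mode_add_right, hsub, mode_intCast_mul, mul_comm,
      ← mode_intCast_mul, mul_one_div, add_comm s]
    push_cast
    rfl
  have hdvd : (N : ℤ) ∣ (l : ℤ) - (j : ℤ) ↔ l = j := by
    refine ⟨fun h => Fin.ext ?_, fun h => by rw [h, sub_self]; exact dvd_zero _⟩
    have := Int.eq_zero_of_dvd_of_natAbs_lt_natAbs h (by omega)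
    omega
  simp only [hterm, sum_mode_add_div, hdvd]
  split_ifs with h
  · rw [h, sub_self, mode_zero_left, mul_one]
  · rfl

lemma sum_norm_vecCoeff_sq [NeZero N] (u : Fin N → ℂ) (s : ℤ) :
    ∑ m ∈ Finset.range N, ‖vecCoeff N ε u (s + m)‖ ^ 2 = (N : ℝ)⁻¹ * ∑ i, ‖u i‖ ^ 2 := by
  have hN : (N : ℂ) ≠ 0 := NeZero.ne _
  have hterm (m : ℕ) : (‖vecCoeff N ε u (s + m)‖ : ℂ) ^ 2 = (N : ℂ)⁻¹ ^ 2 * ∑ j, ∑ l,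
      u j * starRingEnd ℂ (u l) * (mode (-(s + m)) (sg (1 / N) ε (j : ℕ)) *
        mode (s + m) (sg (1 / N) ε (l : ℕ))) := by
    rw [← Complex.mul_conj', vecCoeff]
    simp only [map_mul, map_sum, map_inv₀, map_natCast, conj_mode, neg_neg]
    rw [mul_mul_mul_comm, Finset.sum_mul_sum, sq]
    simp only [mul_mul_mul_comm]
  have hsum : ∑ m ∈ Finset.range N, (‖vecCoeff N ε u (s + m)‖ : ℂ) ^ 2
      = (N : ℂ)⁻¹ * ∑ i, (‖u i‖ : ℂ) ^ 2 := by
    simp only [hterm]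
    rw [← Finset.mul_sum, Finset.sum_comm]
    simp only [Finset.sum_comm (s := Finset.range N), ← Finset.mul_sum,
      sum_mode_neg_mul_mode_sg, mul_ite, mul_zero, Finset.sum_ite_eq', Finset.mem_univ, if_true,
      Complex.mul_conj', ← Finset.sum_mul]
    field_simp
  apply Complex.ofReal_injective
  push_cast
  exact hsum

lemma sq_norm_vecCoeff_le [NeZero N] (u : Fin N → ℂ) (k : ℤ) :
    ‖vecCoeff N ε u k‖ ^ 2 ≤ (N : ℝ)⁻¹ * ∑ i, ‖u i‖ ^ 2 := by
  rw [← sum_norm_vecCoeff_sq N ε u k]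
  simpa using Finset.single_le_sum (f := fun m : ℕ => ‖vecCoeff N ε u (k + m)‖ ^ 2)
    (fun m _ => sq_nonneg _) (Finset.mem_range.2 (NeZero.pos N))

end

lemma norm_diffSymbol_le_two_mul (N : ℕ) (k : ℤ) : ‖diffSymbol N k‖ ≤ 2 * N := by
  have hsub : ‖mode k (1 / N) - 1‖ ≤ 2 := by
    refine (norm_sub_le _ _).trans ?_
    rw [norm_mode, norm_one]
    norm_num
  rw [diffSymbol, norm_mul, RCLike.norm_natCast, mul_comm]
  gcongr

lemma WmatPG_eq_cornerDiff_add (N : ℕ) [NeZero N] (ε : ℝ) (i j : ℤ) {V₁ V₂ : ℝ → ℝ → ℂ}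
    (hV₂ : IntegrableOn (fun p : ℝ × ℝ => V₂ (sg (1 / N) (ε + p.1) i) (sg (1 / N) p.2 j))
      unitSquare) :
    WmatPG V₁ V₂ (1 / N) ε i j
      = cornerDiff (fun p => V₁ (sg (1 / N) (ε + p.1) i) (sg (1 / N) p.2 j))
        + (N ^ 2 : ℂ)⁻¹ *
          ∫ p in unitSquare, V₂ (sg (1 / N) (ε + p.1) i) (sg (1 / N) p.2 j) := by
  rw [WmatPG, integral_cell N ε i j hV₂]
  simp only [cornerDiff, sg_add_one, add_zero, zero_add]

lemma WmatPG_add (N : ℕ) [NeZero N] (ε : ℝ) (i j : ℤ) {V₁ V₂ V₁' V₂' : ℝ → ℝ → ℂ}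
    (hV₂ : IntegrableOn (fun p : ℝ × ℝ => V₂ (sg (1 / N) (ε + p.1) i) (sg (1 / N) p.2 j))
      unitSquare)
    (hV₂' : IntegrableOn (fun p : ℝ × ℝ => V₂' (sg (1 / N) (ε + p.1) i) (sg (1 / N) p.2 j))
      unitSquare) :
    WmatPG (fun s t => V₁ s t + V₁' s t) (fun s t => V₂ s t + V₂' s t) (1 / N) ε i j
      = WmatPG V₁ V₂ (1 / N) ε i j + WmatPG V₁' V₂' (1 / N) ε i j := by
  rw [WmatPG_eq_cornerDiff_add N ε i j hV₂, WmatPG_eq_cornerDiff_add N ε i j hV₂',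
    WmatPG_eq_cornerDiff_add N ε i j (hV₂.add hV₂'), integral_add hV₂ hV₂']
  simp only [cornerDiff]
  ring

/-- The Fourier symbol of the matrix `W^{ε,∘}` with kernels `A₁ f` and `A₂ f`. -/
noncomputable def convSymbol (A₁ A₂ : ℝ → ℝ → ℂ) (f : ℝ → ℂ) (N : ℕ) (ε : ℝ) (k : ℤ)
    (x : ℤ × ℤ) : ℂ :=
  diffSymbol N k * diffSymbol N (-(k - x.1 - x.2)) *
      (fc₂ A₁ x.1 x.2 * gridCoeff N ε f (k - x.1))
    + fc₂ A₂ x.1 x.2 * cellCoeff N ε f k (k - x.1 - x.2) (k - x.1)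

lemma hasSum_vecCoeff_cornerDiff {A : ℝ → ℝ → ℂ} (hA : SPK A) {f : ℝ → ℂ}
    (hf : Function.Periodic f 1) (N : ℕ) [NeZero N] (ε : ℝ) (j k : ℤ) :
    HasSum (fun x : ℤ × ℤ => diffSymbol N k * diffSymbol N (-(k - x.1 - x.2)) *
        (fc₂ A x.1 x.2 * gridCoeff N ε f (k - x.1)) * mode (-(k - x.1 - x.2)) (sg (1 / N) 0 j))
      (N ^ 2 * vecCoeff N ε (fun i => cornerDiff fun p =>
        convKer A f (sg (1 / N) (ε + p.1) (i : ℕ)) (sg (1 / N) p.2 j)) k) := by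
  have h := hasSum_vecCoeff_convKer hA hf N ε j k
  have hvalue : vecCoeff N ε (fun i => cornerDiff fun p =>
        convKer A f (sg (1 / N) (ε + p.1) (i : ℕ)) (sg (1 / N) p.2 j)) k
      = cornerDiff fun p => vecCoeff N ε
        (fun i => convKer A f (sg (1 / N) (ε + p.1) (i : ℕ)) (sg (1 / N) p.2 j)) k := by
    simp only [cornerDiff, vecCoeff, add_mul, sub_mul, Finset.sum_add_distrib,
      Finset.sum_sub_distrib, mul_add, mul_sub]
  rw [hvalue, cornerDiff]
  refine (((((h (1, 1)).sub (h (0, 1))).sub (h (1, 0))).add (h (0, 0))).mul_left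
    (N ^ 2 : ℂ)).congr_fun fun x => ?_
  have hcorner := cornerDiff_offsetCoeff hf N ε k (k - x.1 - x.2) (k - x.1)
  rw [cornerDiff] at hcorner
  linear_combination (-(fc₂ A x.1 x.2 * mode (-(k - x.1 - x.2)) (sg (1 / N) 0 j))) * hcorner

lemma hasSum_vecCoeff_WmatPG_convKer {A₁ A₂ : ℝ → ℝ → ℂ} (hA₁ : SPK A₁) (hA₂ : SPK A₂)
    {f : ℝ → ℂ} (hf : PeriodicIntegrable f) (N : ℕ) [NeZero N] (ε : ℝ) (j k : ℤ) :
    HasSum (fun x : ℤ × ℤ =>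
        convSymbol A₁ A₂ f N ε k x * mode (-(k - x.1 - x.2)) (sg (1 / N) 0 j))
      (N ^ 2 * vecCoeff N ε
        (fun i => WmatPG (convKer A₁ f) (convKer A₂ f) (1 / N) ε (i : ℕ) j) k) := by
  have hN : (N : ℂ) ^ 2 ≠ 0 := pow_ne_zero _ (NeZero.ne _)
  have hsum := (hasSum_vecCoeff_cornerDiff hA₁ hf.periodic N ε j k).add
    (hasSum_vecCoeff_cell hA₂ hf N ε j k)
  simp only [WmatPG_eq_cornerDiff_add N ε _ j (integrableOn_convKer_cell hA₂ hf N ε _ j),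
    vecCoeff_add, vecCoeff_const_mul, mul_add, mul_inv_cancel_left₀ hN, convSymbol, add_mul]
  exact hsum

/-- The data of the hypersingular operator, the kernels being `A₁ f + K₁` and `A₂ f + K₂` with
`f = logSinSq`, where `A₁` has the constant value `α` on the diagonal; compared with `logKer`, the
factor `i / (2π)` and the term `log 4` are absorbed into the smooth functions. -/
structure HypersingularData where
  (A₁ K₁ A₂ K₂ : ℝ → ℝ → ℂ)
  spk_A₁ : SPK A₁
  spk_K₁ : SPK K₁
  spk_A₂ : SPK A₂
  spk_K₂ : SPK K₂
  α : ℂ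
  diag (s : ℝ) : A₁ s s = α

namespace HypersingularData

variable (H : HypersingularData)

/-- The kernel of the weakly singular operator between the two derivatives. -/
noncomputable def V₁ (s t : ℝ) : ℂ := convKer H.A₁ logSinSq s t + convKer H.K₁ (fun _ => 1) s t

/-- The kernel of the weakly singular perturbation. -/
noncomputable def V₂ (s t : ℝ) : ℂ := convKer H.A₂ logSinSq s t + convKer H.K₂ (fun _ => 1) s t

/-- The principal symbol of `W^{ε,∘}`. -/
noncomputable def principal (N : ℕ) (ε : ℝ) (k : ℤ) : ℂ :=
  H.α * (diffSymbol N k * diffSymbol N (-k) * gridCoeff N ε logSinSq k)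

/-- The symbol of `W^{ε,∘}` minus the principal symbol, by Fourier modes `x` of the smooth
factors. -/
noncomputable def symbol (N : ℕ) (ε : ℝ) (k : ℤ) (x : ℤ × ℤ) : ℂ :=
  diffSymbol N k * diffSymbol N (-(k - x.1 - x.2)) *
      (fc₂ H.A₁ x.1 x.2 *
          (gridCoeff N ε logSinSq (k - x.1) - gridCoeff N ε logSinSq (k - x.1 - x.2))
        + fc₂ H.K₁ x.1 x.2 * gridCoeff N ε (fun _ => 1) (k - x.1))
    + (fc₂ H.A₂ x.1 x.2 * cellCoeff N ε logSinSq k (k - x.1 - x.2) (k - x.1)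
        + fc₂ H.K₂ x.1 x.2 * cellCoeff N ε (fun _ => 1) k (k - x.1 - x.2) (k - x.1))

/-- The image of `φ` under `W^{ε,∘}`. -/
noncomputable def apply (N : ℕ) (ε : ℝ) (φ : Fin N → ℂ) (i : Fin N) : ℂ :=
  ∑ j : Fin N, WmatPG H.V₁ H.V₂ (1 / N) ε (i : ℕ) (j : ℕ) * φ j

lemma hasSum_vecCoeff_column (N : ℕ) [NeZero N] (ε : ℝ) (j k : ℤ) :
    HasSum (fun x : ℤ × ℤ => (convSymbol H.A₁ H.A₂ logSinSq N ε k x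
        + convSymbol H.K₁ H.K₂ (fun _ => 1) N ε k x) * mode (-(k - x.1 - x.2)) (sg (1 / N) 0 j))
      (N ^ 2 * vecCoeff N ε (fun i => WmatPG H.V₁ H.V₂ (1 / N) ε (i : ℕ) j) k) := by
  have hadd (i : ℤ) := WmatPG_add N ε i j (V₁ := convKer H.A₁ logSinSq)
    (V₁' := convKer H.K₁ fun _ => 1)
    (integrableOn_convKer_cell H.spk_A₂ periodicIntegrable_logSinSq N ε i j)
    (integrableOn_convKer_cell H.spk_K₂ (periodicIntegrable_const 1) N ε i j)
  have hsum := (hasSum_vecCoeff_WmatPG_convKer H.spk_A₁ H.spk_A₂ periodicIntegrable_logSinSq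
    N ε j k).add (hasSum_vecCoeff_WmatPG_convKer H.spk_K₁ H.spk_K₂ (periodicIntegrable_const 1)
    N ε j k)
  simp only [← mul_add, ← add_mul, ← vecCoeff_add, ← hadd] at hsum
  exact hsum

lemma hasSum_vecCoeff_apply (N : ℕ) [NeZero N] (ε : ℝ) (φ : Fin N → ℂ) (k : ℤ) :
    HasSum (fun x : ℤ × ℤ => (convSymbol H.A₁ H.A₂ logSinSq N ε k x
        + convSymbol H.K₁ H.K₂ (fun _ => 1) N ε k x) * vecCoeff N 0 φ (k - x.1 - x.2))
      (N * vecCoeff N ε (H.apply N ε φ) k) := by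
  have hsum := (hasSum_sum (s := Finset.univ) fun (j : Fin N) _ =>
    (H.hasSum_vecCoeff_column N ε (j : ℕ) k).mul_right (φ j)).mul_left (N : ℂ)⁻¹
  have hvalue : N * vecCoeff N ε (H.apply N ε φ) k = (N : ℂ)⁻¹ * ∑ j : Fin N, N ^ 2 *
      vecCoeff N ε (fun i => WmatPG H.V₁ H.V₂ (1 / N) ε (i : ℕ) (j : ℕ)) k * φ j := by
    rw [show H.apply N ε φ = fun i => ∑ j, _ from rfl, vecCoeff_sum_mul, Finset.mul_sum,
      Finset.mul_sum]
    exact Finset.sum_congr rfl fun j _ => by field_simp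
  rw [hvalue]
  refine hsum.congr_fun fun x => ?_
  rw [vecCoeff, mul_left_comm, Finset.mul_sum]
  exact congrArg _ (Finset.sum_congr rfl fun j _ => by ring)

lemma symbol_eq (N : ℕ) (ε : ℝ) (k : ℤ) (x : ℤ × ℤ) :
    H.symbol N ε k x = convSymbol H.A₁ H.A₂ logSinSq N ε k x
      + convSymbol H.K₁ H.K₂ (fun _ => 1) N ε k x
      - fc₂ H.A₁ x.1 x.2 * (diffSymbol N k * diffSymbol N (-(k - x.1 - x.2))
        * gridCoeff N ε logSinSq (k - x.1 - x.2)) := by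
  rw [symbol, convSymbol, convSymbol]
  ring

theorem discrete_equation (N : ℕ) [NeZero N] (ε : ℝ) (φ : Fin N → ℂ) (k : ℤ) :
    HasSum (fun x : ℤ × ℤ => H.symbol N ε k x * vecCoeff N 0 φ (k - x.1 - x.2))
      (N * vecCoeff N ε (H.apply N ε φ) k - H.principal N ε k * vecCoeff N 0 φ k) := by
  have hbound (l : ℤ) : ‖diffSymbol N k * diffSymbol N (-(k - l)) *
      gridCoeff N ε logSinSq (k - l) * vecCoeff N 0 φ (k - l)‖
      ≤ 2 * N * (2 * N) * gridAverage N (fun x => ‖logSinSq x‖) ε *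
          √((N : ℝ)⁻¹ * ∑ i, ‖φ i‖ ^ 2) := by
    have hφ := Real.le_sqrt_of_sq_le (sq_norm_vecCoeff_le N 0 φ (k - l))
    have hgrid := norm_gridCoeff_le_gridAverage N ε logSinSq (k - l)
    have := (norm_nonneg _).trans hgrid
    rw [norm_mul, norm_mul, norm_mul]
    gcongr <;> exact norm_diffSymbol_le_two_mul N _
  have hdiag := SPK.hasSum_fc₂_mul_of_diag H.spk_A₁ H.diag hbound
  have hsub := (H.hasSum_vecCoeff_apply N ε φ k).sub hdiag
  simp only [sub_zero] at hsub
  rw [principal, mul_assoc]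
  refine hsub.congr_fun fun x => ?_
  rw [symbol_eq, ← sub_sub]
  ring

end HypersingularData

/-! ### Symbol estimates -/

section

variable (N : ℕ) [NeZero N]

lemma wt_bmod_le (m t : ℤ) : wt (m.bmod N) ≤ wt (m - N * t) := by
  have hsplit : m - N * t = m.bmod N + N * (m.bdiv N - t) := by
    linear_combination (-1 : ℤ) * Int.bmod_add_bdiv m N
  have hsmall := two_mul_abs_bmod_le m N
  rw [hsplit, wt, wt]
  refine add_le_add_right ?_ 1
  rcases eq_or_ne (m.bdiv N - t) 0 with h | h
  · rw [h, mul_zero, add_zero]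
  · have hN : (N : ℝ) ≤ |(N : ℝ) * ((m.bdiv N - t : ℤ) : ℝ)| := by
      rw [abs_mul, Nat.abs_cast]
      exact le_mul_of_one_le_right N.cast_nonneg (by exact_mod_cast Int.one_le_abs h)
    have htri := abs_sub (((m.bmod N : ℤ) : ℝ) + N * ((m.bdiv N - t : ℤ) : ℝ)) (m.bmod N : ℤ)
    rw [add_sub_cancel_left] at htri
    rw [Int.cast_add, Int.cast_mul, Int.cast_natCast]
    linarith

lemma wt_bmod_le_mul (m n : ℤ) : wt (m.bmod N) ≤ wt (m - n) * wt (n.bmod N) := by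
  have h := wt_bmod_le N m (n.bdiv N)
  rw [show m - N * n.bdiv N = n.bmod N + (m - n) by
    linear_combination (-1 : ℤ) * Int.bmod_add_bdiv n N] at h
  exact h.trans ((wt_add_le _ _).trans_eq (mul_comm _ _))

lemma wt_bmod_le_of_dvd {m n : ℤ} (h : (N : ℤ) ∣ m - n) : wt (m.bmod N) ≤ wt n := by
  obtain ⟨t, ht⟩ := h
  have := wt_bmod_le N m t
  rwa [← ht, sub_sub_cancel] at this

lemma mode_bmod_one_div (k : ℤ) : mode (k.bmod N) (1 / N) = mode k (1 / N) := by
  have hN : ((N : ℤ) : ℝ) * (1 / N) = (1 : ℤ) := by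
    have : (N : ℝ) ≠ 0 := NeZero.ne _
    push_cast
    field_simp
  have hmul : mode (N * k.bdiv N) (1 / N) = 1 := by
    rw [mul_comm, ← mode_intCast_mul, hN, mode_intCast]
  conv_rhs => rw [← Int.bmod_add_bdiv k N, mode_add_left, hmul, mul_one]

lemma norm_diffSymbol_le (k : ℤ) : ‖diffSymbol N k‖ ≤ 2 * π * wt (k.bmod N) := by
  have hN : (0 : ℝ) < N := Nat.cast_pos.2 (NeZero.pos N)
  have h := norm_mode_sub_one_le (k.bmod N) (1 / N)
  rw [mode_bmod_one_div, abs_of_pos (one_div_pos.2 hN)] at h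
  rw [diffSymbol, norm_mul, RCLike.norm_natCast]
  calc (N : ℝ) * ‖mode k (1 / N) - 1‖
      ≤ N * (2 * π * |((k.bmod N : ℤ) : ℝ)| * (1 / N)) := by gcongr
    _ = 2 * π * |((k.bmod N : ℤ) : ℝ)| := by field_simp
    _ ≤ 2 * π * wt (k.bmod N) := by gcongr; exact abs_le_wt _

end

lemma norm_diffSymbol_neg (N : ℕ) (k : ℤ) : ‖diffSymbol N (-k)‖ = ‖diffSymbol N k‖ := by
  rw [diffSymbol, diffSymbol, norm_mul, norm_mul, ← conj_mode, ← map_one (starRingEnd ℂ),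
    ← map_sub, Complex.norm_conj]
  simp only [map_one]

lemma four_mul_abs_le_norm_diffSymbol {N : ℕ} {k : ℤ} (hk : 2 * |(k : ℝ)| ≤ N) :
    4 * |(k : ℝ)| ≤ ‖diffSymbol N k‖ := by
  rcases N.eq_zero_or_pos with rfl | hN
  · simp only [CharP.cast_eq_zero] at hk
    linarith [norm_nonneg (diffSymbol 0 k)]
  have hN : (0 : ℝ) < N := Nat.cast_pos.2 hN
  have harg : |π * k / N| = π / 2 * (2 * |(k : ℝ)| / N) := by
    rw [abs_div, abs_mul, abs_of_pos Real.pi_pos, Nat.abs_cast]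
    ring
  have hjordan := Real.mul_abs_le_abs_sin (x := π * k / N) (by
    rw [harg]
    exact mul_le_of_le_one_right (by positivity) ((div_le_one hN).2 hk))
  have hmode : mode k (1 / N) = exp (I * ((2 * (π * k / N) : ℝ) : ℂ)) := by
    rw [mode]
    congr 1
    push_cast
    ring
  rw [diffSymbol, norm_mul, RCLike.norm_natCast, hmode, Complex.norm_exp_I_mul_ofReal_sub_one,
    mul_div_cancel_left₀ _ two_ne_zero, norm_mul, Real.norm_ofNat, Real.norm_eq_abs]
  calc 4 * |(k : ℝ)| = N * (2 * (2 / π * |π * k / N|)) := by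
        rw [harg]
        field_simp
        ring
    _ ≤ N * (2 * |Real.sin (π * k / N)|) := by gcongr

lemma tendsto_diffSymbol (k : ℤ) :
    Tendsto (fun N => diffSymbol N k) atTop (𝓝 (2 * π * I * k)) := by
  have hslope := (hasDerivAt_mode k 0).tendsto_slope_zero
  have hstep : Tendsto (fun N : ℕ => (1 : ℝ) / N) atTop (𝓝[≠] 0) := by
    refine tendsto_nhdsWithin_iff.2 ⟨tendsto_one_div_atTop_nhds_zero_nat, ?_⟩
    filter_upwards [eventually_gt_atTop 0] with N hN
    exact one_div_ne_zero (Nat.cast_ne_zero.2 hN.ne')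
  rw [mode_zero_right, mul_one] at hslope
  refine (hslope.comp hstep).congr fun N => ?_
  simp [diffSymbol]

lemma exists_norm_diffSymbol_mul_sub_le : ∃ C, ∀ (N : ℕ) [NeZero N] (ε : ℝ) (k p q : ℤ),
    ‖diffSymbol N k * diffSymbol N (-(k - p - q)) *
      (gridCoeff N ε logSinSq (k - p) - gridCoeff N ε logSinSq (k - p - q))‖
      ≤ C * (wt p * wt q) ^ 3 := by
  obtain ⟨C, hC⟩ := exists_norm_gridCoeff_logSinSq_sub_le
  refine ⟨4 * π ^ 2 * |C|, fun N _ ε k p q => ?_⟩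
  set m := k - p - q
  have hdiff := hC N ε m (-q)
  rw [show m - -q = k - p by ring, wt_neg] at hdiff
  have hp := one_le_wt p
  have hq := wt_pos q
  have hm := wt_pos (m.bmod N)
  have hk : wt (k.bmod N) ≤ wt p * wt q * wt (m.bmod N) := by
    refine (wt_bmod_le_mul N k m).trans ?_
    gcongr
    rw [show k - m = p + q by ring]
    exact wt_add_le p q
  rw [norm_mul, norm_mul, norm_diffSymbol_neg]
  calc ‖diffSymbol N k‖ * ‖diffSymbol N m‖ *
        ‖gridCoeff N ε logSinSq (k - p) - gridCoeff N ε logSinSq m‖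
      ≤ 2 * π * (wt p * wt q * wt (m.bmod N)) * (2 * π * wt (m.bmod N)) *
          (|C| * wt q ^ 2 * (wt (m.bmod N) ^ 2)⁻¹) := by
        gcongr
        · exact (norm_diffSymbol_le N k).trans (by gcongr)
        · exact norm_diffSymbol_le N m
        · exact hdiff.trans (by gcongr; exact le_abs_self C)
    _ = 4 * π ^ 2 * |C| * (wt p * wt q ^ 3) := by
        field_simp
        ring
    _ ≤ 4 * π ^ 2 * |C| * (wt p * wt q) ^ 3 := by
        rw [mul_pow]
        gcongr
        exact le_self_pow₀ hp (by norm_num)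

lemma norm_diffSymbol_mul_gridCoeff_one_le (N : ℕ) [NeZero N] (ε : ℝ) (k p q : ℤ) :
    ‖diffSymbol N k * diffSymbol N (-(k - p - q)) * gridCoeff N ε (fun _ => 1) (k - p)‖
      ≤ 4 * π ^ 2 * (wt p * wt q) := by
  have hp := wt_pos p
  have hq := wt_pos q
  rw [gridCoeff_one]
  split_ifs with hdvd
  · have hk := wt_bmod_le_of_dvd N hdvd
    have hm : wt ((k - p - q).bmod N) ≤ wt q := by
      rw [← wt_neg q]
      exact wt_bmod_le_of_dvd N (by simpa using hdvd)
    rw [norm_mul, norm_mul, norm_mode, mul_one, norm_diffSymbol_neg]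
    calc ‖diffSymbol N k‖ * ‖diffSymbol N (k - p - q)‖
        ≤ 2 * π * wt p * (2 * π * wt q) := by
          gcongr
          · exact (norm_diffSymbol_le N k).trans (by gcongr)
          · exact (norm_diffSymbol_le N _).trans (by gcongr)
      _ = 4 * π ^ 2 * (wt p * wt q) := by ring
  · rw [mul_zero, norm_zero]
    positivity

lemma tendsto_gridCoeff_one (ε : ℝ) (n : ℤ) :
    Tendsto (fun N => gridCoeff N ε (fun _ => 1) n) atTop (𝓝 (fc (fun _ => 1) n)) := by
  have h := tendsto_gridCoeff_mode ε 0 n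
  rwa [funext mode_zero_left, if_congr eq_comm rfl rfl, ← fc_one] at h

namespace HypersingularData

variable (H : HypersingularData)

lemma le_norm_principal {N : ℕ} (hN : 2 ≤ N) {ε : ℝ} (hε : (mode 1 ε).im ≠ 0) {k : ℤ}
    (hk : 2 * |(k : ℝ)| ≤ N) :
    2 * ‖H.α‖ * |Real.cos (π * ε)| * |(k : ℝ)| ≤ ‖H.principal N ε k‖ := by
  rcases eq_or_ne k 0 with rfl | hk0
  · simp
  have hk_pos : 0 < |(k : ℝ)| := abs_pos.2 (Int.cast_ne_zero.2 hk0)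
  have hkN : |k| < N := by
    have : |(k : ℝ)| < N := by linarith
    exact_mod_cast this
  have : NeZero N := ⟨by omega⟩
  have hgrid := abs_cos_div_le_norm_gridCoeff hε hk0 hkN
  have hdiff := four_mul_abs_le_norm_diffSymbol hk
  rw [principal, norm_mul, norm_mul, norm_mul, norm_diffSymbol_neg]
  calc 2 * ‖H.α‖ * |Real.cos (π * ε)| * |(k : ℝ)|
      = ‖H.α‖ * (4 * |(k : ℝ)| * (4 * |(k : ℝ)|) *
          (|Real.cos (π * ε)| / (8 * |(k : ℝ)|))) := by
        field_simp
        ring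
    _ ≤ ‖H.α‖ * (‖diffSymbol N k‖ * ‖diffSymbol N k‖ * ‖gridCoeff N ε logSinSq k‖) := by
        gcongr

/-- A rapidly decreasing bound for the symbol, up to a constant. -/
noncomputable def majorant (x : ℤ × ℤ) : ℝ :=
  (wt x.1 * wt x.2) ^ 3 * (‖fc₂ H.A₁ x.1 x.2‖ + ‖fc₂ H.K₁ x.1 x.2‖ + ‖fc₂ H.A₂ x.1 x.2‖
    + ‖fc₂ H.K₂ x.1 x.2‖)

lemma summable_wt_pow_mul_majorant (r : ℕ) :
    Summable fun x : ℤ × ℤ => (wt x.1 * wt x.2) ^ r * H.majorant x := by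
  refine ((((H.spk_A₁.summable_wt_pow_mul_norm_fc₂ (r + 3)).add
    (H.spk_K₁.summable_wt_pow_mul_norm_fc₂ (r + 3))).add
    (H.spk_A₂.summable_wt_pow_mul_norm_fc₂ (r + 3))).add
    (H.spk_K₂.summable_wt_pow_mul_norm_fc₂ (r + 3))).congr fun x => ?_
  rw [majorant]
  ring

lemma exists_norm_symbol_le : ∃ C, ∀ (N : ℕ) [NeZero N] (ε : ℝ) (k : ℤ) (x : ℤ × ℤ),
    ‖H.symbol N ε k x‖ ≤ C * H.majorant x := by
  obtain ⟨C, hC⟩ := exists_norm_diffSymbol_mul_sub_le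
  set M := max (max C (4 * π ^ 2)) (max (l1Norm logSinSq) (l1Norm fun _ => 1))
  refine ⟨M, fun N _ ε k x => ?_⟩
  have hw : 1 ≤ wt x.1 * wt x.2 := one_le_mul_of_one_le_of_one_le (one_le_wt _) (one_le_wt _)
  have hM : 0 ≤ M := le_max_of_le_left (le_max_of_le_right (by positivity))
  have hw₃ : M ≤ M * (wt x.1 * wt x.2) ^ 3 := le_mul_of_one_le_right hM (one_le_pow₀ hw)
  have hA₁ := (hC N ε k x.1 x.2).trans
    (mul_le_mul_of_nonneg_right (show C ≤ M by simp [M]) (by positivity))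
  have hK₁ : _ ≤ M * (wt x.1 * wt x.2) ^ 3 :=
    (norm_diffSymbol_mul_gridCoeff_one_le N ε k x.1 x.2).trans
      (mul_le_mul (by simp [M]) (le_self_pow₀ hw (by norm_num)) (by positivity) hM)
  have hA₂ := ((periodicIntegrable_logSinSq.norm_cellCoeff_le N ε k (k - x.1 - x.2)
    (k - x.1)).trans (show _ ≤ M by simp [M])).trans hw₃
  have hK₂ := (((periodicIntegrable_const 1).norm_cellCoeff_le N ε k (k - x.1 - x.2)
    (k - x.1)).trans (show _ ≤ M by simp [M])).trans hw₃
  rw [symbol, mul_add, mul_left_comm, mul_left_comm _ (fc₂ H.K₁ x.1 x.2)]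
  calc _ ≤ ‖fc₂ H.A₁ x.1 x.2‖ * (M * (wt x.1 * wt x.2) ^ 3)
          + ‖fc₂ H.K₁ x.1 x.2‖ * (M * (wt x.1 * wt x.2) ^ 3)
          + (‖fc₂ H.A₂ x.1 x.2‖ * (M * (wt x.1 * wt x.2) ^ 3)
            + ‖fc₂ H.K₂ x.1 x.2‖ * (M * (wt x.1 * wt x.2) ^ 3)) := by
        refine norm_add_le_of_le (norm_add_le_of_le ?_ ?_) (norm_add_le_of_le ?_ ?_) <;>
          · rw [norm_mul]
            gcongr
    _ = M * H.majorant x := by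
        rw [majorant]
        ring

/-- The limit of the principal symbol: the Fourier multiplier `α (2πi)² k² / |k|`. -/
noncomputable def limitPrincipal (k : ℤ) : ℂ :=
  H.α * (2 * π * I * k * (2 * π * I * (-k : ℤ)) * fc logSinSq k)

/-- The limit of the symbol: the hypersingular operator minus its principal part. -/
noncomputable def limitSymbol (k : ℤ) (x : ℤ × ℤ) : ℂ :=
  2 * π * I * k * (2 * π * I * (-(k - x.1 - x.2) : ℤ)) *
      (fc₂ H.A₁ x.1 x.2 * (fc logSinSq (k - x.1) - fc logSinSq (k - x.1 - x.2))
        + fc₂ H.K₁ x.1 x.2 * fc (fun _ => 1) (k - x.1))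
    + (fc₂ H.A₂ x.1 x.2 * fc logSinSq (k - x.1) + fc₂ H.K₂ x.1 x.2 * fc (fun _ => 1) (k - x.1))

/-- The coefficients `a` of a formal Fourier series satisfy the equation `Wφ = 0` written in Fourier
space. -/
def IsLimitSolution (a : ℤ → ℂ) : Prop :=
  ∀ k, HasSum (fun x : ℤ × ℤ => H.limitSymbol k x * a (k - x.1 - x.2)) (-(H.limitPrincipal k * a k))

lemma tendsto_principal {ε : ℝ} (hε : Real.sin (π * ε) ≠ 0) (k : ℤ) :
    Tendsto (fun N => H.principal N ε k) atTop (𝓝 (H.limitPrincipal k)) :=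
  (((tendsto_diffSymbol k).mul (tendsto_diffSymbol (-k))).mul
    (tendsto_gridCoeff_logSinSq hε k)).const_mul H.α

lemma tendsto_symbol {ε : ℝ} (hε : Real.sin (π * ε) ≠ 0) (k : ℤ) (x : ℤ × ℤ) :
    Tendsto (fun N => H.symbol N ε k x) atTop (𝓝 (H.limitSymbol k x)) :=
  (((tendsto_diffSymbol k).mul (tendsto_diffSymbol _)).mul
    ((((tendsto_gridCoeff_logSinSq hε _).sub (tendsto_gridCoeff_logSinSq hε _)).const_mul _).add
      ((tendsto_gridCoeff_one ε _).const_mul _))).add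
    (((tendsto_cellCoeff periodicIntegrable_logSinSq ε _ _ _).const_mul _).add
      ((tendsto_cellCoeff (periodicIntegrable_const 1) ε _ _ _).const_mul _))

end HypersingularData

/-! ### Passage to the limit -/

/-- A sequence of vectors `φ n` of size `N n → ∞`, normalised in the scaled Euclidean norm, whose
images under `W^{ε,∘}` contradict the stability estimate in the limit. -/
structure AlmostKernel (H : HypersingularData) (ε : ℝ) where
  N : ℕ → ℕ
  φ (n : ℕ) : Fin (N n) → ℂ
  le_N (n : ℕ) : n + 2 ≤ N n
  sum_sq_φ (n : ℕ) : ∑ j, ‖φ n j‖ ^ 2 = N n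
  sum_sq_apply (n : ℕ) : N n * ∑ i, ‖H.apply (N n) ε (φ n) i‖ ^ 2 ≤ (1 / ((n : ℝ) + 1)) ^ 2

namespace AlmostKernel

variable {H : HypersingularData} {ε : ℝ} (S : AlmostKernel H ε)

instance (n : ℕ) : NeZero (S.N n) := ⟨by have := S.le_N n; omega⟩

lemma tendsto_N : Tendsto S.N atTop atTop :=
  tendsto_atTop_mono (fun n => (Nat.le_add_right n 2).trans (S.le_N n)) tendsto_id

/-- The discrete Fourier coefficients of the vectors. -/
noncomputable def coeff (n : ℕ) (k : ℤ) : ℂ := vecCoeff (S.N n) 0 (S.φ n) k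

/-- The scaled discrete Fourier coefficients of the images of the vectors. -/
noncomputable def residual (n : ℕ) (k : ℤ) : ℂ :=
  S.N n * vecCoeff (S.N n) ε (H.apply (S.N n) ε (S.φ n)) k

lemma norm_coeff_le_one (n : ℕ) (k : ℤ) : ‖S.coeff n k‖ ≤ 1 := by
  have h := sq_norm_vecCoeff_le (S.N n) 0 (S.φ n) k
  rw [S.sum_sq_φ, inv_mul_cancel₀ (NeZero.ne _)] at h
  exact (sq_le_one_iff₀ (norm_nonneg _)).1 h

lemma norm_residual_le (n : ℕ) (k : ℤ) : ‖S.residual n k‖ ≤ 1 / ((n : ℝ) + 1) := by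
  have hN : (S.N n : ℝ) ≠ 0 := NeZero.ne _
  refine (sq_le_sq₀ (norm_nonneg _) (by positivity)).1 ?_
  calc ‖S.residual n k‖ ^ 2
      = (S.N n : ℝ) ^ 2 * ‖vecCoeff (S.N n) ε (H.apply (S.N n) ε (S.φ n)) k‖ ^ 2 := by
        rw [residual, norm_mul, mul_pow, RCLike.norm_natCast]
    _ ≤ (S.N n : ℝ) ^ 2 * ((S.N n : ℝ)⁻¹ * ∑ i, ‖H.apply (S.N n) ε (S.φ n) i‖ ^ 2) := by
        gcongr
        exact sq_norm_vecCoeff_le _ _ _ _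
    _ = S.N n * ∑ i, ‖H.apply (S.N n) ε (S.φ n) i‖ ^ 2 := by field_simp
    _ ≤ (1 / ((n : ℝ) + 1)) ^ 2 := S.sum_sq_apply n

lemma hasSum_symbol_mul_coeff (n : ℕ) (k : ℤ) :
    HasSum (fun x : ℤ × ℤ => H.symbol (S.N n) ε k x * S.coeff n (k - x.1 - x.2))
      (S.residual n k - H.principal (S.N n) ε k * S.coeff n k) :=
  H.discrete_equation (S.N n) ε (S.φ n) k

lemma exists_summable_bound : ∃ ω : ℤ × ℤ → ℝ, Summable ω ∧ ∀ n k x,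
    ‖H.symbol (S.N n) ε k x * S.coeff n (k - x.1 - x.2)‖ ≤ ω x := by
  obtain ⟨C, hC⟩ := H.exists_norm_symbol_le
  refine ⟨fun x => C * H.majorant x, ?_, fun n k x => ?_⟩
  · simpa using (H.summable_wt_pow_mul_majorant 0).mul_left C
  · rw [norm_mul]
    exact (mul_le_of_le_one_right (norm_nonneg _) (S.norm_coeff_le_one n _)).trans
      (hC (S.N n) ε k x)

lemma exists_wt_mul_norm_coeff_le (hα : H.α ≠ 0) (hε : (mode 1 ε).im ≠ 0) :
    ∃ C, ∀ n (k : ℤ), 2 * |(k : ℝ)| ≤ S.N n → wt k * ‖S.coeff n k‖ ≤ C := by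
  obtain ⟨ω, hω, hbound⟩ := S.exists_summable_bound
  have hcos : Real.cos (π * ε) ≠ 0 := right_ne_zero_of_mul (mode_one_im ε ▸ hε)
  set c := 2 * ‖H.α‖ * |Real.cos (π * ε)|
  have hc : 0 < c := by positivity
  refine ⟨1 + (1 + ∑' x, ω x) / c, fun n k hk => ?_⟩
  have hN : 2 ≤ S.N n := (Nat.le_add_left 2 n).trans (S.le_N n)
  have hresidual : ‖S.residual n k‖ ≤ 1 := (S.norm_residual_le n k).trans
    ((div_le_one (by positivity)).2 (by linarith [n.cast_nonneg (α := ℝ)]))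
  have hprincipal : c * |(k : ℝ)| * ‖S.coeff n k‖ ≤ 1 + ∑' x, ω x := by
    calc c * |(k : ℝ)| * ‖S.coeff n k‖ ≤ ‖H.principal (S.N n) ε k * S.coeff n k‖ := by
          rw [norm_mul]
          gcongr
          exact H.le_norm_principal hN hε hk
      _ ≤ ‖S.residual n k‖ + ‖S.residual n k - H.principal (S.N n) ε k * S.coeff n k‖ := by
          simpa using norm_sub_le (S.residual n k)
            (S.residual n k - H.principal (S.N n) ε k * S.coeff n k)
      _ ≤ 1 + ∑' x, ω x := by
          gcongr
          rw [← (S.hasSum_symbol_mul_coeff n k).tsum_eq]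
          exact tsum_of_norm_bounded hω.hasSum (hbound n k)
  rw [wt, add_mul, one_mul]
  gcongr
  · exact S.norm_coeff_le_one n k
  · rw [le_div_iff₀ hc]
    linarith

/-- The selection of a subsequence. -/
def subseq {g : ℕ → ℕ} (hg : StrictMono g) : AlmostKernel H ε where
  N n := S.N (g n)
  φ n := S.φ (g n)
  le_N n := (Nat.add_le_add_right (hg.id_le n) 2).trans (S.le_N (g n))
  sum_sq_φ n := S.sum_sq_φ (g n)
  sum_sq_apply n := (S.sum_sq_apply (g n)).trans (by gcongr; exact hg.id_le n)

lemma exists_subseq_tendsto_coeff (S : AlmostKernel H ε) : ∃ (T : AlmostKernel H ε) (a : ℤ → ℂ),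
    ∀ k, Tendsto (fun n => T.coeff n k) atTop (𝓝 (a k)) := by
  have hcompact : IsCompact (Set.pi Set.univ fun _ : ℤ => Metric.closedBall (0 : ℂ) 1) :=
    isCompact_univ_pi fun _ => isCompact_closedBall _ _
  obtain ⟨a, -, g, hg, hlim⟩ := hcompact.tendsto_subseq (x := S.coeff)
    fun n k _ => by simpa using S.norm_coeff_le_one n k
  exact ⟨S.subseq hg, a, tendsto_pi_nhds.1 hlim⟩

lemma isLimitSolution_of_tendsto {S : AlmostKernel H ε} {a : ℤ → ℂ}
    (ha : ∀ k, Tendsto (fun n => S.coeff n k) atTop (𝓝 (a k))) (hε : (mode 1 ε).im ≠ 0) :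
    H.IsLimitSolution a := fun k => by
  have hsin : Real.sin (π * ε) ≠ 0 :=
    right_ne_zero_of_mul (left_ne_zero_of_mul (mode_one_im ε ▸ hε))
  obtain ⟨ω, hω, hbound⟩ := S.exists_summable_bound
  have hterm (x : ℤ × ℤ) := ((H.tendsto_symbol hsin k x).comp S.tendsto_N).mul (ha (k - x.1 - x.2))
  have hleft := tendsto_tsum_of_dominated_convergence hω hterm
    (Eventually.of_forall fun n x => hbound n k x)
  have hresidual : Tendsto (fun n => S.residual n k) atTop (𝓝 0) :=
    squeeze_zero_norm (S.norm_residual_le · k) tendsto_one_div_add_atTop_nhds_zero_nat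
  have hright := hresidual.sub (((H.tendsto_principal hsin k).comp S.tendsto_N).mul (ha k))
  have heq : ∑' x : ℤ × ℤ, H.limitSymbol k x * a (k - x.1 - x.2) = -(H.limitPrincipal k * a k) := by
    rw [← zero_sub]
    exact tendsto_nhds_unique hleft
      (hright.congr fun n => (S.hasSum_symbol_mul_coeff n k).tsum_eq.symm)
  rw [← heq]
  exact (Summable.of_norm_bounded hω fun x =>
    le_of_tendsto' (hterm x).norm fun n => hbound n k x).hasSum

-- The window `2|k| ≤ N` contains a full set of residues mod `N`.
lemma one_le_tsum_window (n : ℕ) (hs : Summable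
      (Set.indicator {k : ℤ | 2 * |(k : ℝ)| ≤ S.N n} fun k => ‖S.coeff n k‖ ^ 2)) :
    1 ≤ ∑' k, Set.indicator {k : ℤ | 2 * |(k : ℝ)| ≤ S.N n} (fun k => ‖S.coeff n k‖ ^ 2) k := by
  set s : ℤ := -(S.N n / 2 : ℕ)
  have hparseval : ∑ m ∈ Finset.range (S.N n), ‖S.coeff n (s + m)‖ ^ 2 = 1 :=
    (sum_norm_vecCoeff_sq (S.N n) 0 (S.φ n) s).trans
      (by rw [S.sum_sq_φ, inv_mul_cancel₀ (NeZero.ne _)])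
  have hwindow (m : ℕ) (hm : m ∈ Finset.range (S.N n)) :
      s + m ∈ {k : ℤ | 2 * |(k : ℝ)| ≤ S.N n} := by
    have : 2 * |s + m| ≤ S.N n := by
      rw [Finset.mem_range] at hm
      rcases abs_cases (s + m) with h | h <;> omega
    exact_mod_cast this
  have hinj : Set.InjOn (fun m : ℕ => s + m) (Finset.range (S.N n)) := fun _ _ _ _ h => by
    simpa using h
  rw [← hparseval, ← Finset.sum_congr rfl fun m hm => Set.indicator_of_mem (hwindow m hm)
    fun k => ‖S.coeff n k‖ ^ 2, ← Finset.sum_image hinj (f := Set.indicator _ _)]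
  exact hs.sum_le_tsum _ fun _ _ => Set.indicator_nonneg (fun _ _ => sq_nonneg _) _

lemma limit_ne_zero {S : AlmostKernel H ε} {a : ℤ → ℂ}
    (ha : ∀ k, Tendsto (fun n => S.coeff n k) atTop (𝓝 (a k))) (hα : H.α ≠ 0)
    (hε : (mode 1 ε).im ≠ 0) : a ≠ 0 := by
  obtain ⟨C, hC⟩ := S.exists_wt_mul_norm_coeff_le hα hε
  set window : ℕ → Set ℤ := fun n => {k : ℤ | 2 * |(k : ℝ)| ≤ S.N n}
  have hbound (n : ℕ) (k : ℤ) :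
      ‖(window n).indicator (fun k => ‖S.coeff n k‖ ^ 2) k‖ ≤ C ^ 2 * (wt k ^ 2)⁻¹ := by
    have := wt_pos k
    by_cases hk : k ∈ window n
    · rw [Set.indicator_of_mem hk, norm_pow, norm_norm, ← div_eq_mul_inv,
        le_div_iff₀ (by positivity), mul_comm, ← mul_pow]
      gcongr
      exact hC n k hk
    · rw [Set.indicator_of_notMem hk, norm_zero]
      positivity
  have hlim (k : ℤ) : Tendsto (fun n => (window n).indicator (fun k => ‖S.coeff n k‖ ^ 2) k) atTop
      (𝓝 (‖a k‖ ^ 2)) := by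
    refine ((ha k).norm.pow 2).congr' ?_
    filter_upwards [(tendsto_natCast_atTop_atTop.comp S.tendsto_N).eventually_ge_atTop
      (2 * |(k : ℝ)|)] with n hn
    exact (Set.indicator_of_mem (show k ∈ window n from hn) (fun k => ‖S.coeff n k‖ ^ 2)).symm
  have hdominated := summable_inv_wt_sq.mul_left (C ^ 2)
  have hone := ge_of_tendsto' (tendsto_tsum_of_dominated_convergence hdominated hlim
    (Eventually.of_forall hbound))
    fun n => S.one_le_tsum_window n (Summable.of_norm_bounded hdominated (hbound n))
  rintro rfl
  norm_num at hone

theorem exists_isLimitSolution (S : AlmostKernel H ε) (hα : H.α ≠ 0)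
    (hε : (mode 1 ε).im ≠ 0) :
    ∃ a : ℤ → ℂ, a ≠ 0 ∧ (∀ k, ‖a k‖ ≤ 1) ∧ H.IsLimitSolution a := by
  obtain ⟨T, a, ha⟩ := S.exists_subseq_tendsto_coeff
  exact ⟨a, limit_ne_zero ha hα hε, fun k => le_of_tendsto' (ha k).norm (T.norm_coeff_le_one · k),
    isLimitSolution_of_tendsto ha hε⟩

end AlmostKernel

/-! ### Smooth functions given by Fourier series -/

/-- Faster than polynomial decay of Fourier coefficients. -/
def RapidlyDecreasing (a : ℤ → ℂ) : Prop := ∀ r : ℕ, ∃ C, ∀ k, wt k ^ r * ‖a k‖ ≤ C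

/-- The function with Fourier coefficients `a`. -/
noncomputable def fourierSum (a : ℤ → ℂ) (t : ℝ) : ℂ := ∑' m, a m * mode m t

/-- The Fourier coefficients of the derivative of `fourierSum a`. -/
noncomputable def derivCoeff (a : ℤ → ℂ) (m : ℤ) : ℂ := 2 * π * I * m * a m

lemma periodic_fourierSum (a : ℤ → ℂ) : Function.Periodic (fourierSum a) 1 := fun t => by
  simp only [fourierSum, mode_add_one]

namespace RapidlyDecreasing

variable {a b : ℤ → ℂ}

lemma exists_norm_le (ha : RapidlyDecreasing a) : ∃ C, ∀ k, ‖a k‖ ≤ C := by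
  simpa using ha 0

lemma summable_norm (ha : RapidlyDecreasing a) : Summable fun k => ‖a k‖ := by
  obtain ⟨C, hC⟩ := ha 2
  refine Summable.of_nonneg_of_le (fun k => norm_nonneg _) (fun k => ?_)
    (summable_inv_wt_sq.mul_left C)
  rw [← div_eq_mul_inv, le_div_iff₀' (pow_pos (wt_pos k) 2)]
  exact hC k

lemma hasSum (ha : RapidlyDecreasing a) (t : ℝ) :
    HasSum (fun m => a m * mode m t) (fourierSum a t) :=
  (Summable.of_norm (by simpa [norm_mode] using ha.summable_norm)).hasSum

lemma fc_fourierSum (ha : RapidlyDecreasing a) (m : ℤ) : fc (fourierSum a) m = a m :=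
  fc_eq_of_hasSum ha.summable_norm ha.hasSum m

lemma add (ha : RapidlyDecreasing a) (hb : RapidlyDecreasing b) :
    RapidlyDecreasing fun k => a k + b k := fun r => by
  obtain ⟨C, hC⟩ := ha r
  obtain ⟨D, hD⟩ := hb r
  refine ⟨C + D, fun k => ?_⟩
  have hw := pow_pos (wt_pos k) r
  calc wt k ^ r * ‖a k + b k‖ ≤ wt k ^ r * (‖a k‖ + ‖b k‖) := by gcongr; exact norm_add_le _ _
    _ ≤ C + D := by rw [mul_add]; exact add_le_add (hC k) (hD k)

lemma fourierSum_add (ha : RapidlyDecreasing a) (hb : RapidlyDecreasing b) (t : ℝ) :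
    fourierSum (fun k => a k + b k) t = fourierSum a t + fourierSum b t := by
  rw [← ((ha.hasSum t).add (hb.hasSum t)).tsum_eq, fourierSum]
  simp only [add_mul]

protected lemma derivCoeff (ha : RapidlyDecreasing a) :
    RapidlyDecreasing (derivCoeff a) := fun r => by
  obtain ⟨C, hC⟩ := ha (r + 1)
  refine ⟨2 * π * C, fun k => ?_⟩
  have hnorm : ‖derivCoeff a k‖ = 2 * π * |(k : ℝ)| * ‖a k‖ := by
    simp [derivCoeff, abs_of_pos Real.pi_pos]
  have hw := pow_pos (wt_pos k) r
  calc wt k ^ r * ‖derivCoeff a k‖ ≤ wt k ^ r * (2 * π * wt k * ‖a k‖) := by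
        rw [hnorm]; gcongr; exact abs_le_wt k
    _ = 2 * π * (wt k ^ (r + 1) * ‖a k‖) := by ring
    _ ≤ 2 * π * C := by gcongr; exact hC k

lemma hasDerivAt (ha : RapidlyDecreasing a) (t : ℝ) :
    HasDerivAt (fourierSum a) (fourierSum (derivCoeff a) t) t :=
  hasDerivAt_tsum ha.derivCoeff.summable_norm
    (fun m y => ((hasDerivAt_mode m y).const_mul (a m)).congr_deriv
      (show _ = 2 * π * I * m * a m * mode m y by ring))
    (fun m y => by rw [norm_mul, norm_mode, mul_one, derivCoeff]) (ha.hasSum 0).summable t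

lemma deriv_fourierSum (ha : RapidlyDecreasing a) :
    deriv (fourierSum a) = fourierSum (derivCoeff a) :=
  funext fun t => (ha.hasDerivAt t).deriv

lemma continuous_fourierSum (ha : RapidlyDecreasing a) : Continuous (fourierSum a) :=
  continuous_iff_continuousAt.2 fun t => (ha.hasDerivAt t).continuousAt

lemma contDiff_fourierSum (ha : RapidlyDecreasing a) : ContDiff ℝ (⊤ : ℕ∞) (fourierSum a) := by
  refine contDiff_infty.2 fun n => ?_
  induction n generalizing a with
  | zero => exact contDiff_zero.2 ha.continuous_fourierSum
  | succ n ih =>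
    rw [Nat.cast_succ, contDiff_succ_iff_deriv, ha.deriv_fourierSum]
    exact ⟨fun t => (ha.hasDerivAt t).differentiableAt, by simp, ih ha.derivCoeff⟩

end RapidlyDecreasing

/-! ### Weakly singular operators on Fourier series -/

lemma norm_fc_le_l1Norm (f : ℝ → ℂ) (n : ℤ) : ‖fc f n‖ ≤ l1Norm f := by
  rw [fc_eq_integral_mode]
  simpa [norm_mode, l1Norm] using intervalIntegral.norm_integral_le_integral_norm (μ := volume)
    (f := fun t => f t * mode (-n) t) zero_le_one

lemma wt_le_wt_sub_mul (k p q : ℤ) : wt k ≤ wt (k - p - q) * (wt p * wt q) :=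
  calc wt k = wt (k - p - q + (p + q)) := by congr 1; ring
    _ ≤ wt (k - p - q) * wt (p + q) := wt_add_le _ _
    _ ≤ wt (k - p - q) * (wt p * wt q) :=
      mul_le_mul_of_nonneg_left (wt_add_le p q) (wt_pos _).le

lemma wt_pow_mul_norm_le_of_hasSum {w : ℤ × ℤ → ℂ} {ω : ℤ × ℤ → ℝ} (hw : ∀ x, ‖w x‖ ≤ ω x) {r : ℕ}
    (hω : Summable fun x : ℤ × ℤ => (wt x.1 * wt x.2) ^ r * ω x) {a : ℤ → ℂ} {C : ℝ}
    (ha : ∀ k, wt k ^ r * ‖a k‖ ≤ C) {k : ℤ} {b : ℂ}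
    (hb : HasSum (fun x : ℤ × ℤ => w x * a (k - x.1 - x.2)) b) :
    wt k ^ r * ‖b‖ ≤ (∑' x : ℤ × ℤ, (wt x.1 * wt x.2) ^ r * ω x) * C := by
  have hk : ‖((wt k ^ r : ℝ) : ℂ)‖ = wt k ^ r := by
    rw [norm_real, Real.norm_of_nonneg (pow_pos (wt_pos k) r).le]
  rw [← hk, ← norm_mul, ← (hb.mul_left _).tsum_eq]
  refine tsum_of_norm_bounded (hω.hasSum.mul_right C) fun x => ?_
  have hω₀ := (norm_nonneg _).trans (hw x)
  have hx : 0 < wt x.1 * wt x.2 := mul_pos (wt_pos _) (wt_pos _)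
  have hk₀ := (wt_pos k).le
  have := (wt_pos (k - x.1 - x.2)).le
  rw [norm_mul, norm_mul, hk]
  calc wt k ^ r * (‖w x‖ * ‖a (k - x.1 - x.2)‖)
      ≤ (wt (k - x.1 - x.2) * (wt x.1 * wt x.2)) ^ r * (ω x * ‖a (k - x.1 - x.2)‖) := by
        gcongr
        · exact wt_le_wt_sub_mul k x.1 x.2
        · exact hw x
    _ = (wt x.1 * wt x.2) ^ r * ω x * (wt (k - x.1 - x.2) ^ r * ‖a (k - x.1 - x.2)‖) := by ring
    _ ≤ (wt x.1 * wt x.2) ^ r * ω x * C := by gcongr; exact ha _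

lemma PeriodicIntegrable.integral_mode_mul_comp_sub {f : ℝ → ℂ} (hf : PeriodicIntegrable f) (n : ℤ)
    (s : ℝ) : ∫ t in (0 : ℝ)..1, mode n t * f (s - t) = fc f n * mode n s := by
  have hterm (t : ℝ) : mode n t * f (s - t) = f (s - t) * mode (-n) (s - t) * mode n s := by
    rw [mul_assoc, ← mode_neg_right, neg_sub, ← mode_add_right, sub_add_cancel, mul_comm]
  have hshift := (hf.mul_mode (-n)).periodic.intervalIntegral_add_eq (s - 1) 0
  rw [sub_add_cancel, zero_add] at hshift
  simp only [hterm, intervalIntegral.integral_mul_const]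
  rw [intervalIntegral.integral_comp_sub_left (fun x => f x * mode (-n) x), sub_zero, hshift,
    fc_eq_integral_mode]

lemma PeriodicIntegrable.intervalIntegrable_comp_sub_left {f : ℝ → ℂ} (hf : PeriodicIntegrable f)
    (s a b : ℝ) : IntervalIntegrable (fun t => f (s - t)) volume a b := by
  simpa using (hf.intervalIntegrable (s - a) (s - b)).comp_sub_left s

/-- The reindexing `(k, p, q) ↦ (p, q, k - p - q)` of triples of frequencies, inverse to taking `k`
as their sum. -/
@[simps]
def tripleShear : ℤ × (ℤ × ℤ) ≃ (ℤ × ℤ) × ℤ where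
  toFun z := (z.2, z.1 - z.2.1 - z.2.2)
  invFun y := (y.1.1 + y.1.2 + y.2, y.1)
  left_inv z := by simp
  right_inv y := by ext <;> simp only; ring

lemma PeriodicIntegrable.hasSum_integral_mul_comp_sub {f : ℝ → ℂ} (hf : PeriodicIntegrable f)
    {ι : Type*} [Countable ι] {d : ι → ℂ} {q : ι → ℤ} (hd : Summable fun i => ‖d i‖) {v : ℝ → ℂ}
    (hv : ∀ t, HasSum (fun i => d i * mode (q i) t) (v t)) (s : ℝ) :
    HasSum (fun i => d i * (fc f (q i) * mode (q i) s)) (∫ t in (0 : ℝ)..1, v t * f (s - t)) := by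
  have hfs := hf.intervalIntegrable_comp_sub_left s 0 1
  refine (intervalIntegral.hasSum_integral_of_dominated_convergence
    (F := fun i t => d i * mode (q i) t * f (s - t)) (fun i t => ‖d i‖ * ‖f (s - t)‖)
    (fun i => ?_) (fun i => ae_of_all _ fun t _ => by simp [norm_mode])
    (ae_of_all _ fun t _ => hd.mul_right _) ?_
    (ae_of_all _ fun t _ => (hv t).mul_right _)).congr_fun fun i => ?_
  · exact (Continuous.aestronglyMeasurable (by fun_prop)).mul
      (intervalIntegrable_iff.1 hfs).aestronglyMeasurable
  · simpa only [tsum_mul_right] using hfs.norm.const_mul _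
  · simp only [mul_assoc, intervalIntegral.integral_const_mul, hf.integral_mode_mul_comp_sub]

lemma RapidlyDecreasing.hasSum_mul_fourierSum {c : ℤ → ℂ} (hc : RapidlyDecreasing c)
    {ι : Type*} {d : ι → ℂ} {q : ι → ℤ} (hd : Summable fun i => ‖d i‖) {u : ℂ} {t : ℝ}
    (hu : HasSum (fun i => d i * mode (q i) t) u) :
    HasSum (fun y : ι × ℤ => d y.1 * c y.2 * mode (q y.1 + y.2) t) (u * fourierSum c t) := by
  refine (hu.mul (hc.hasSum t) (.of_norm ?_)).congr_fun fun y => ?_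
  · simpa [norm_mode] using
      hd.mul_of_nonneg hc.summable_norm (fun _ => norm_nonneg _) (fun _ => norm_nonneg _)
  · rw [mode_add_left]; ring

lemma hasSum_mul_mode_of_triples {G : ℤ × ℤ → ℤ → ℂ} {s : ℝ} {v : ℂ}
    (hv : HasSum (fun y : (ℤ × ℤ) × ℤ => G y.1 y.2 * mode (y.1.1 + y.1.2 + y.2) s) v) {d : ℤ → ℂ}
    (hd : ∀ k, HasSum (fun x : ℤ × ℤ => G x (k - x.1 - x.2)) (d k)) :
    HasSum (fun k => d k * mode k s) v := by
  have hsheared : HasSum (fun z : ℤ × (ℤ × ℤ) => G z.2 (z.1 - z.2.1 - z.2.2) * mode z.1 s) v := by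
    rw [← tripleShear.hasSum_iff] at hv
    simpa [Function.comp_def] using hv
  exact hsheared.prod_fiberwise fun k => (hd k).mul_right (mode k s)

lemma hasSum_integral_mul_fourierSum {f : ℝ → ℂ} (hf : PeriodicIntegrable f) {c : ℤ → ℂ}
    (hc : RapidlyDecreasing c) {g : ℤ × ℤ → ℂ} (hg : Summable fun x => ‖g x‖) {u : ℝ → ℂ} {s : ℝ}
    (hu : ∀ t, HasSum (fun x => g x * (mode x.1 s * mode x.2 t)) (u t)) {d : ℤ → ℂ}
    (hd : ∀ k, HasSum (fun x : ℤ × ℤ => g x * (fc f (k - x.1) * c (k - x.1 - x.2))) (d k)) :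
    HasSum (fun k => d k * mode k s) (∫ t in (0 : ℝ)..1, u t * f (s - t) * fourierSum c t) := by
  have hgs : Summable fun x : ℤ × ℤ => ‖g x * mode x.1 s‖ := by simpa [norm_mode] using hg
  have hgc : Summable fun y : (ℤ × ℤ) × ℤ => ‖g y.1 * mode y.1.1 s * c y.2‖ := by
    simpa only [norm_mul] using
      hgs.mul_of_nonneg hc.summable_norm (fun _ => norm_nonneg _) (fun _ => norm_nonneg _)
  have hint := hf.hasSum_integral_mul_comp_sub hgc (fun t => hc.hasSum_mul_fourierSum hgs
    ((hu t).congr_fun fun x => mul_assoc _ _ _)) s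
  simp only [mul_right_comm (u _)]
  refine hasSum_mul_mode_of_triples (G := fun x m => g x * (fc f (x.2 + m) * c m))
    (hint.congr_fun fun y => ?_) fun k => (hd k).congr_fun fun x => ?_
  · simp only [add_assoc, mode_add_left]; ring
  · simp only [add_sub_cancel]

/-- The Fourier coefficients of the image of `fourierSum c` under the integral operator with kernel
`A(s,t) f(s-t)`. -/
noncomputable def convCoeff (A : ℝ → ℝ → ℂ) (f : ℝ → ℂ) (c : ℤ → ℂ) (k : ℤ) : ℂ :=
  ∑' x : ℤ × ℤ, fc₂ A x.1 x.2 * (fc f (k - x.1) * c (k - x.1 - x.2))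

section

variable {A : ℝ → ℝ → ℂ} {c : ℤ → ℂ}

lemma hasSum_convCoeff (hA : SPK A) (f : ℝ → ℂ) (hc : RapidlyDecreasing c) (k : ℤ) :
    HasSum (fun x : ℤ × ℤ => fc₂ A x.1 x.2 * (fc f (k - x.1) * c (k - x.1 - x.2)))
      (convCoeff A f c k) := by
  obtain ⟨C, hC⟩ := hc.exists_norm_le
  refine (Summable.of_norm_bounded (hA.summable_norm_fc₂.mul_right (l1Norm f * C))
    fun x => ?_).hasSum
  have hfc := norm_fc_le_l1Norm f (k - x.1)
  have := (norm_nonneg _).trans hfc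
  rw [norm_mul, norm_mul]
  gcongr
  exact hC _

protected lemma RapidlyDecreasing.convCoeff (hA : SPK A) (f : ℝ → ℂ)
    (hc : RapidlyDecreasing c) : RapidlyDecreasing (convCoeff A f c) := fun r => by
  obtain ⟨C, hC⟩ := hc r
  refine ⟨(∑' x : ℤ × ℤ, (wt x.1 * wt x.2) ^ r * (‖fc₂ A x.1 x.2‖ * l1Norm f)) * C, fun k => ?_⟩
  refine wt_pow_mul_norm_le_of_hasSum (w := fun x => fc₂ A x.1 x.2 * fc f (k - x.1))
    (fun x => ?_) ?_ hC ((hasSum_convCoeff hA f hc k).congr_fun fun x => mul_assoc _ _ _)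
  · rw [norm_mul]
    gcongr
    exact norm_fc_le_l1Norm f _
  · exact ((hA.summable_wt_pow_mul_norm_fc₂ r).mul_right (l1Norm f)).congr
      fun x => (mul_assoc _ _ _)

lemma integral_convKer_mul_fourierSum (hA : SPK A) {f : ℝ → ℂ} (hf : PeriodicIntegrable f)
    (hc : RapidlyDecreasing c) (s : ℝ) :
    ∫ t in (0 : ℝ)..1, convKer A f s t * fourierSum c t = fourierSum (convCoeff A f c) s :=
  (hasSum_integral_mul_fourierSum (g := fun x => fc₂ A x.1 x.2) hf hc hA.summable_norm_fc₂
    (fun t => hA.hasSum_fc₂ s t) (fun k => hasSum_convCoeff hA f hc k)).tsum_eq.symm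

lemma intervalIntegrable_convKer_mul (hA : SPK A) {f ψ : ℝ → ℂ} (hf : PeriodicIntegrable f)
    (hψ : Continuous ψ) (s a b : ℝ) :
    IntervalIntegrable (fun t => convKer A f s t * ψ t) volume a b := by
  have hAs := hA.continuous_right s
  refine ((hf.intervalIntegrable_comp_sub_left s a b).continuousOn_mul
    (g := fun t => A s t * ψ t) (Continuous.continuousOn (by fun_prop))).congr fun t _ => ?_
  simp only [convKer]
  ring

lemma Vop_convKer_add_fourierSum {B : ℝ → ℝ → ℂ} (hA : SPK A) (hB : SPK B) {f g : ℝ → ℂ}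
    (hf : PeriodicIntegrable f) (hg : PeriodicIntegrable g) (hc : RapidlyDecreasing c) :
    Vop (fun s t => convKer A f s t + convKer B g s t) (fourierSum c)
      = fourierSum fun k => convCoeff A f c k + convCoeff B g c k := by
  funext s
  have hψ := hc.continuous_fourierSum
  rw [(hc.convCoeff hA f).fourierSum_add (hc.convCoeff hB g),
    ← integral_convKer_mul_fourierSum hA hf hc, ← integral_convKer_mul_fourierSum hB hg hc,
    ← intervalIntegral.integral_add (intervalIntegrable_convKer_mul hA hf hψ s 0 1)
      (intervalIntegrable_convKer_mul hB hg hψ s 0 1)]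
  simp only [Vop, add_mul]

end

/-! ### Regularity of the solutions of the limit equation -/

namespace HypersingularData

variable {H : HypersingularData}

lemma norm_limitPrincipal (H : HypersingularData) (k : ℤ) :
    ‖H.limitPrincipal k‖ = ‖H.α‖ * (2 * π) ^ 2 * |(k : ℝ)| := by
  rw [limitPrincipal, fc_logSinSq]
  simp only [Int.cast_neg, norm_mul, norm_neg, Complex.norm_ofNat, norm_real, norm_I, norm_intCast,
    Real.norm_eq_abs, abs_inv, abs_abs, abs_of_pos Real.pi_pos]
  rcases eq_or_ne (k : ℝ) 0 with hk | hk
  · simp [hk]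
  · field_simp [abs_ne_zero.2 hk]

lemma exists_norm_limitSymbol_le (H : HypersingularData) :
    ∃ C, ∀ k x, ‖H.limitSymbol k x‖ ≤ C * H.majorant x := by
  obtain ⟨C, hC⟩ := H.exists_norm_symbol_le
  refine ⟨C, fun k x => le_of_tendsto (H.tendsto_symbol (ε := 1 / 2) (by simp [← div_eq_mul_inv])
    k x).norm ?_⟩
  filter_upwards [eventually_ne_atTop 0] with N hN
  have : NeZero N := ⟨hN⟩
  exact hC N _ k x

lemma hasSum_fc₂_mul_diag (H : HypersingularData) {c : ℤ → ℂ} (hc : RapidlyDecreasing c) (k : ℤ) :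
    HasSum (fun x : ℤ × ℤ =>
      fc₂ H.A₁ x.1 x.2 * (fc logSinSq (k - (x.1 + x.2)) * c (k - (x.1 + x.2))))
      (H.α * (fc logSinSq k * c k)) := by
  obtain ⟨C, hC⟩ := hc.exists_norm_le
  have hdiag := H.spk_A₁.hasSum_fc₂_mul_of_diag H.diag
    (G := fun l => fc logSinSq (k - l) * c (k - l)) (C := l1Norm logSinSq * C) fun l => by
      have hfc := norm_fc_le_l1Norm logSinSq (k - l)
      have := (norm_nonneg _).trans hfc
      rw [norm_mul]
      gcongr
      exact hC _
  simpa only [sub_zero] using hdiag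

namespace IsLimitSolution

variable {a : ℤ → ℂ}

-- The principal symbol grows like `|k|` while the rest is bounded: each use of the equation gains
-- one order of decay.
lemma rapidlyDecreasing (ha : H.IsLimitSolution a) (hα : H.α ≠ 0) {B : ℝ} (hB : ∀ k, ‖a k‖ ≤ B) :
    RapidlyDecreasing a := fun r => by
  obtain ⟨C, hC⟩ := H.exists_norm_limitSymbol_le
  induction r with
  | zero => exact ⟨B, by simpa using hB⟩
  | succ r ih =>
    obtain ⟨D, hD⟩ := ih
    have hsummable := ((H.summable_wt_pow_mul_majorant r).mul_left C).congr
      fun x => mul_left_comm _ _ _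
    set S := (∑' x : ℤ × ℤ, (wt x.1 * wt x.2) ^ r * (C * H.majorant x)) * D
    have hc : 0 < ‖H.α‖ * (2 * π) ^ 2 := by have := Real.pi_pos; positivity
    refine ⟨D + S / (‖H.α‖ * (2 * π) ^ 2), fun k => ?_⟩
    have hk := wt_pow_mul_norm_le_of_hasSum (hC k) hsummable hD (ha k)
    rw [norm_neg, norm_mul, norm_limitPrincipal] at hk
    calc wt k ^ (r + 1) * ‖a k‖ = wt k ^ r * ‖a k‖ + wt k ^ r * (|(k : ℝ)| * ‖a k‖) := by
          rw [wt]; ring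
      _ ≤ D + S / (‖H.α‖ * (2 * π) ^ 2) := by
          gcongr
          · exact hD k
          · rw [le_div_iff₀ hc]
            linarith

lemma Wop_fourierSum_eq_zero (ha : H.IsLimitSolution a) (hR : RapidlyDecreasing a) (s : ℝ) :
    Wop H.V₁ H.V₂ (fourierSum a) s = 0 := by
  have hlog := periodicIntegrable_logSinSq
  have hone := periodicIntegrable_const (1 : ℂ)
  have hR' := hR.derivCoeff
  have hV₁ := (hR'.convCoeff H.spk_A₁ logSinSq).add (hR'.convCoeff H.spk_K₁ fun _ => 1)
  rw [Wop, hR.deriv_fourierSum, show H.V₁ = fun s t => _ + _ from rfl,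
    show H.V₂ = fun s t => _ + _ from rfl,
    Vop_convKer_add_fourierSum H.spk_A₁ H.spk_K₁ hlog hone hR',
    Vop_convKer_add_fourierSum H.spk_A₂ H.spk_K₂ hlog hone hR, hV₁.deriv_fourierSum,
    neg_add_eq_zero]
  congr 1
  funext k
  have hW := ((((hasSum_convCoeff H.spk_A₁ logSinSq hR' k).sub (H.hasSum_fc₂_mul_diag hR' k)).add
    (hasSum_convCoeff H.spk_K₁ (fun _ => 1) hR' k)).mul_left (-(2 * π * I * k))).add
      ((hasSum_convCoeff H.spk_A₂ logSinSq hR k).add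
        (hasSum_convCoeff H.spk_K₂ (fun _ => 1) hR k))
  have hlimit := (hW.congr_fun fun x => ?_).unique (ha k)
  · simp only [limitPrincipal, derivCoeff, Int.cast_neg] at hlimit ⊢
    linear_combination -hlimit
  · simp only [limitSymbol, derivCoeff, sub_sub, Int.cast_neg]
    ring

end IsLimitSolution

/-! ### Stability -/

lemma exists_normalized {N : ℕ} (hN : 0 < N) {ε δ : ℝ} {φ : Fin N → ℂ}
    (hφ : √(∑ i, ‖H.apply N ε φ i‖ ^ 2) < δ * (1 / N) * √(∑ j, ‖φ j‖ ^ 2)) :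
    ∃ ψ : Fin N → ℂ, ∑ j, ‖ψ j‖ ^ 2 = N ∧ N * ∑ i, ‖H.apply N ε ψ i‖ ^ 2 ≤ δ ^ 2 := by
  set R := ∑ i, ‖H.apply N ε φ i‖ ^ 2
  set S := ∑ j, ‖φ j‖ ^ 2
  have hR : 0 ≤ R := Finset.sum_nonneg fun _ _ => sq_nonneg _
  have hS : 0 < S := by
    refine Real.sqrt_ne_zero'.1 fun h => ?_
    rw [h, mul_zero] at hφ
    exact (Real.sqrt_nonneg _).not_gt hφ
  have hRS : R ≤ (δ * (1 / N)) ^ 2 * S := by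
    rw [← Real.sq_sqrt hR, ← Real.sq_sqrt hS.le, ← mul_pow]
    gcongr
  have hc : ‖(√(N / S) : ℂ)‖ ^ 2 = N / S := by
    rw [norm_real, Real.norm_of_nonneg (Real.sqrt_nonneg _), Real.sq_sqrt (by positivity)]
  have happly (i : Fin N) : H.apply N ε (fun j => √(N / S) * φ j) i
      = √(N / S) * H.apply N ε φ i := by
    simp only [apply, Finset.mul_sum, mul_left_comm]
  refine ⟨fun j => √(N / S) * φ j, ?_, ?_⟩
  · simp only [norm_mul, mul_pow, hc, ← Finset.mul_sum]
    exact div_mul_cancel₀ _ hS.ne'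
  · simp only [happly, norm_mul, mul_pow, hc, ← Finset.mul_sum]
    calc (N : ℝ) * (N / S * R) ≤ N * (N / S * ((δ * (1 / N)) ^ 2 * S)) := by gcongr
      _ = δ ^ 2 := by field_simp

lemma exists_stability_of_isEmpty_almostKernel {ε : ℝ} [IsEmpty (AlmostKernel H ε)] :
    ∃ h₀ > (0 : ℝ), ∃ β > (0 : ℝ), ∀ N : ℕ, 0 < N → 1 / (N : ℝ) ≤ h₀ → ∀ φ : Fin N → ℂ,
      β * (1 / N) * √(∑ j, ‖φ j‖ ^ 2) ≤ √(∑ i, ‖H.apply N ε φ i‖ ^ 2) := by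
  by_contra! hcon
  have hseq (n : ℕ) : ∃ N : ℕ, n + 2 ≤ N ∧ ∃ φ : Fin N → ℂ, ∑ j, ‖φ j‖ ^ 2 = N ∧
      N * ∑ i, ‖H.apply N ε φ i‖ ^ 2 ≤ (1 / ((n : ℝ) + 1)) ^ 2 := by
    obtain ⟨N, hN, hNn, φ, hφ⟩ := hcon (1 / ((n : ℝ) + 2)) (by positivity) (1 / ((n : ℝ) + 1))
      (by positivity)
    rw [one_div_le_one_div (by positivity) (by positivity)] at hNn
    exact ⟨N, by exact_mod_cast hNn, exists_normalized hN hφ⟩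
  choose N hN φ hφ hres using hseq
  exact isEmptyElim (⟨N, φ, hN, hφ, hres⟩ : AlmostKernel H ε)

end HypersingularData

lemma logKer_eq (A K : ℝ → ℝ → ℂ) :
    logKer A K = fun s t => convKer (fun s t => I / (2 * π) * A s t) logSinSq s t
      + convKer (fun s t => K s t + -(I / (2 * π) * Real.log 4) * A s t) (fun _ => 1) s t := by
  funext s t
  simp only [logKer, convKer, logSinSq]
  push_cast
  ring

/-- The hypersingular data with kernels `logKer A₁ K₁` and `logKer A₂ K₂`. -/
@[simps]
noncomputable def HypersingularData.ofLogKer {A₁ K₁ A₂ K₂ : ℝ → ℝ → ℂ} (hA₁ : SPK A₁)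
    (hK₁ : SPK K₁) (hA₂ : SPK A₂) (hK₂ : SPK K₂) {α : ℂ} (hdiag : ∀ s, A₁ s s = α) :
    HypersingularData where
  A₁ s t := I / (2 * π) * A₁ s t
  K₁ s t := K₁ s t + -(I / (2 * π) * Real.log 4) * A₁ s t
  A₂ s t := I / (2 * π) * A₂ s t
  K₂ s t := K₂ s t + -(I / (2 * π) * Real.log 4) * A₂ s t
  spk_A₁ := hA₁.const_mul _
  spk_K₁ := hK₁.add (hA₁.const_mul _)
  spk_A₂ := hA₂.const_mul _
  spk_K₂ := hK₂.add (hA₂.const_mul _)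
  α := I / (2 * π) * α
  diag s := by rw [hdiag]

lemma mode_one_im_ne_zero {ε : ℝ} (hε : ∀ k : ℤ, ε ≠ (k : ℝ) / 2) : (mode 1 ε).im ≠ 0 := by
  rw [mode_one_im, ← Real.sin_two_mul]
  intro h
  obtain ⟨k, hk⟩ := Real.sin_eq_zero_iff.1 h
  exact hε k (mul_left_cancel₀ Real.pi_ne_zero (by linarith))

end

/-- discrete stability of the non-conforming Petrov–Galerkin matrix `W^{ε,∘}`. -/
theorem stmt_1
    (A1 K1 A2 K2 : ℝ → ℝ → ℂ) (hA1 : SPK A1) (hK1 : SPK K1) (hA2 : SPK A2) (hK2 : SPK K2)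
    (α : ℂ) (hα : α ≠ 0) (hdiag : ∀ s : ℝ, A1 s s = α)
    (hinj : ∀ φ : ℝ → ℂ, ContDiff ℝ (⊤ : ℕ∞) φ → Function.Periodic φ 1 →
      (∀ s, Wop (logKer A1 K1) (logKer A2 K2) φ s = 0) → ∀ s, φ s = 0)
    (ε : ℝ) (hε : ∀ k : ℤ, ε ≠ (k : ℝ) / 2) :
    ∃ h0 > (0:ℝ), ∃ β > (0:ℝ), ∀ N : ℕ, 0 < N → 1 / (N : ℝ) ≤ h0 →
      ∀ φv : Fin N → ℂ,
        β * (1 / (N : ℝ)) * Real.sqrt (∑ j : Fin N, ‖φv j‖ ^ 2) ≤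
          Real.sqrt (∑ i : Fin N,
            ‖∑ j : Fin N,
              WmatPG (logKer A1 K1) (logKer A2 K2) (1 / (N : ℝ)) ε ((i : ℕ) : ℤ) ((j : ℕ) : ℤ)
                * φv j‖ ^ 2) := by
  set H := HypersingularData.ofLogKer hA1 hK1 hA2 hK2 hdiag with hH
  have hV₁ : H.V₁ = logKer A1 K1 := (logKer_eq A1 K1).symm
  have hV₂ : H.V₂ = logKer A2 K2 := (logKer_eq A2 K2).symm
  rw [← hV₁, ← hV₂] at hinj ⊢
  have hHα : H.α ≠ 0 := by simpa [hH, Real.pi_ne_zero] using hα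
  have : IsEmpty (AlmostKernel H ε) := ⟨fun S => by
    obtain ⟨a, ha, hbound, hlimit⟩ := S.exists_isLimitSolution hHα (mode_one_im_ne_zero hε)
    have hR := hlimit.rapidlyDecreasing hHα hbound
    have hzero := hinj _ hR.contDiff_fourierSum (periodic_fourierSum a)
      (hlimit.Wop_fourierSum_eq_zero hR)
    exact ha (funext fun k => by simp [← hR.fc_fourierSum k, fc, hzero])⟩
  exact H.exists_stability_of_isEmpty_almostKernel
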